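/- arXiv:2406.17387 — 2 statements merged into one kernel-verified Lean document; each statement's English description precedes it below -/
import Mathlib

section
/- Let x, y be nonzero points of the unit ball 𝔹ⁿ, let μ ∈ [0, π] be the angle between the vectors x and y, and suppose cos(μ) ≥ (| |x|² − |y|² | + 2·min{|x|, |y|}) / (2·max{|x|, |y|}). Then c̃_{𝔹ⁿ}(x,y) = |x−y| / (1 − min{|x|, |y|}). -/
open Metric Set

/-- The new hyperbolic type metric on the unit ball `𝔹ⁿ` (dimension `n + 2 ≥ 2`):
`c̃_{𝔹ⁿ}(x,y) = |x−y| / inf_{z∈S^{n−1}} max{|x−z|, |y−z|}`. -/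
noncomputable def ctildeB {n : ℕ} (x y : EuclideanSpace ℝ (Fin (n + 2))) : ℝ :=
  dist x y /
    sInf ((fun z => max (dist x z) (dist y z)) '' sphere (0 : EuclideanSpace ℝ (Fin (n + 2))) 1)

/-- The infimum is attained at `x / |x|` when `|x| ≤ |y|`. -/
theorem sInf_aux {n : ℕ} (x y : EuclideanSpace ℝ (Fin (n + 2)))
    (hx : ‖x‖ < 1) (hx0 : x ≠ 0) (hxy : ‖x‖ ≤ ‖y‖)
    (h : (‖y‖ ^ 2 - ‖x‖ ^ 2 + 2 * ‖x‖) / (2 * ‖y‖) ≤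
      Real.cos (InnerProductGeometry.angle x y)) :
    sInf ((fun z => max (dist x z) (dist y z)) '' sphere (0 : EuclideanSpace ℝ (Fin (n + 2))) 1)
      = 1 - ‖x‖ := by
  have ha : 0 < ‖x‖ := norm_pos_iff.mpr hx0
  have hb : 0 < ‖y‖ := lt_of_lt_of_le ha hxy
  rw [div_le_iff₀ (by positivity)] at h
  have hc := InnerProductGeometry.cos_angle_mul_norm_mul_norm x y
  have low : ∀ z ∈ sphere (0 : EuclideanSpace ℝ (Fin (n + 2))) 1,
      1 - ‖x‖ ≤ max (dist x z) (dist y z) := by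
    intro z hz
    have hz1 : ‖z‖ = 1 := by simpa using hz
    have := norm_sub_norm_le z x
    rw [hz1, norm_sub_rev, ← dist_eq_norm] at this
    exact this.trans (le_max_left _ _)
  have hz : ‖x‖⁻¹ • x ∈ sphere (0 : EuclideanSpace ℝ (Fin (n + 2))) 1 := by
    rw [mem_sphere_zero_iff_norm, norm_smul, norm_inv, norm_norm]
    exact inv_mul_cancel₀ ha.ne'
  have hz1 : ‖(‖x‖⁻¹ • x)‖ = 1 := by simpa using hz
  have hix : inner ℝ x (‖x‖⁻¹ • x) = ‖x‖ := by
    rw [real_inner_smul_right, real_inner_self_eq_norm_sq]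
    field_simp
  have hiy : inner ℝ y (‖x‖⁻¹ • x) = Real.cos (InnerProductGeometry.angle x y) * ‖y‖ := by
    rw [real_inner_smul_right, real_inner_comm, ← hc]
    field_simp
  have up : max (dist x (‖x‖⁻¹ • x)) (dist y (‖x‖⁻¹ • x)) ≤ 1 - ‖x‖ := by
    apply max_le
    · rw [dist_eq_norm]
      refine (sq_le_sq₀ (norm_nonneg _) (by linarith)).mp ?_
      rw [norm_sub_sq_real, hix, hz1]
      nlinarith
    · rw [dist_eq_norm]
      refine (sq_le_sq₀ (norm_nonneg _) (by linarith)).mp ?_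
      rw [norm_sub_sq_real, hiy, hz1]
      nlinarith
  apply IsLeast.csInf_eq
  refine ⟨⟨_, hz, le_antisymm up (low _ hz)⟩, ?_⟩
  rintro _ ⟨z, hz, rfl⟩
  exact low z hz

/-- If `x, y ∈ 𝔹ⁿ` are nonzero, `μ` is the angle between `x` and `y`, and
`cos μ ≥ (||x|²−|y|²| + 2 min{|x|,|y|}) / (2 max{|x|,|y|})`, then
`c̃_{𝔹ⁿ}(x,y) = |x−y| / (1 − min{|x|,|y|})`. -/
theorem stmt_9 {n : ℕ} (x y : EuclideanSpace ℝ (Fin (n + 2)))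
    (hx : x ∈ ball (0 : EuclideanSpace ℝ (Fin (n + 2))) 1)
    (hy : y ∈ ball (0 : EuclideanSpace ℝ (Fin (n + 2))) 1)
    (hx0 : x ≠ 0) (hy0 : y ≠ 0)
    (h : (|‖x‖ ^ 2 - ‖y‖ ^ 2| + 2 * min ‖x‖ ‖y‖) / (2 * max ‖x‖ ‖y‖) ≤
      Real.cos (InnerProductGeometry.angle x y)) :
    ctildeB x y = dist x y / (1 - min ‖x‖ ‖y‖) := by
  have hx1 : ‖x‖ < 1 := by simpa using hx
  have hy1 : ‖y‖ < 1 := by simpa using hy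
  unfold ctildeB
  congr 1
  rcases le_total ‖x‖ ‖y‖ with hxy | hxy
  · rw [min_eq_left hxy, max_eq_right hxy, abs_sub_comm,
      abs_of_nonneg (sub_nonneg.mpr (pow_le_pow_left₀ (norm_nonneg _) hxy 2))] at h
    rw [min_eq_left hxy]
    exact sInf_aux x y hx1 hx0 hxy h
  · rw [min_eq_right hxy, max_eq_left hxy,
      abs_of_nonneg (sub_nonneg.mpr (pow_le_pow_left₀ (norm_nonneg _) hxy 2)),
      InnerProductGeometry.angle_comm] at h
    rw [min_eq_right hxy, ← sInf_aux y x hy1 hy0 hxy h]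
    simp only [max_comm]
end

section
/- Let G and G′ each be either the upper half-space ℍⁿ or the open unit ball 𝔹ⁿ, and let f : G → G′ be a bijection of G onto G′ which is conformal at every point of G. Then for all x, y ∈ G, c̃_{G′}(f(x), f(y)) ≤ 2·c̃_G(x, y). -/
open Metric Set

/-- The new hyperbolic type metric of Song and Wang:
`c̃_G(x,y) = |x−y| / inf_{z∈∂G} max{|x−z|, |y−z|}`. -/
noncomputable def ctilde {n : ℕ} (G : Set (EuclideanSpace ℝ (Fin n)))
    (x y : EuclideanSpace ℝ (Fin n)) : ℝ :=
  dist x y / sInf ((fun z => max (dist x z) (dist y z)) '' frontier G)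

/-- The upper half-space `ℍⁿ = {x ∈ ℝⁿ : xₙ > 0}` (dimension `n + 2 ≥ 2`). -/
def upperHalfSpace (n : ℕ) : Set (EuclideanSpace ℝ (Fin (n + 2))) :=
  {x | 0 < x (Fin.last (n + 1))}

section PartOne
variable {E : Type*} [NormedAddCommGroup E] [InnerProductSpace ℝ E] [FiniteDimensional ℝ E]

lemma abs_det_isometry (li : E ≃ₗᵢ[ℝ] E) :
    |LinearMap.det (li.toLinearEquiv : E →ₗ[ℝ] E)| = 1 := by
  let _ : MeasurableSpace E := borel E
  have _ : BorelSpace E := ⟨rfl⟩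
  let μ : MeasureTheory.Measure E := MeasureTheory.Measure.addHaar
  have h := MeasureTheory.Measure.addHaar_image_linearMap μ (li.toLinearEquiv : E →ₗ[ℝ] E)
    (ball (0:E) 1)
  have h2 : (li.toLinearEquiv : E →ₗ[ℝ] E) '' (ball (0:E) 1) = ball 0 1 := by
    simp
  rw [h2] at h
  have hpos : μ (ball (0:E) 1) ≠ 0 := (measure_ball_pos μ 0 one_pos).ne'
  have hfin : μ (ball (0:E) 1) ≠ ⊤ := MeasureTheory.measure_ball_lt_top.ne
  have h3 : ENNReal.ofReal |LinearMap.det (li.toLinearEquiv : E →ₗ[ℝ] E)| = 1 := by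
    have : 1 * μ (ball (0:E) 1) =
      ENNReal.ofReal |LinearMap.det (li.toLinearEquiv : E →ₗ[ℝ] E)| * μ (ball (0:E) 1) := by
      rw [one_mul]; exact h
    exact ((ENNReal.mul_left_inj hpos hfin).1 this).symm
  simpa using h3

lemma conf_data [Nontrivial E] (f' : E →L[ℝ] E) (h : IsConformalMap f') :
    0 < ‖f'‖ ∧ (∀ v, ‖f' v‖ = ‖f'‖ * ‖v‖) ∧ |f'.det| = ‖f'‖ ^ (Module.finrank ℝ E) ∧
    ∃ e : E ≃L[ℝ] E, (e : E →L[ℝ] E) = f' ∧ IsConformalMap (e.symm : E →L[ℝ] E) := by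
  obtain ⟨c, hc, li, rfl⟩ := h
  have hn : ‖c • li.toContinuousLinearMap‖ = |c| := by
    rw [norm_smul, li.norm_toContinuousLinearMap]; simp
  let L : E ≃ₗᵢ[ℝ] E := li.toLinearIsometryEquiv rfl
  have hL : ∀ v, L v = li v := fun v => rfl
  refine ⟨by rw [hn]; positivity, ?_, ?_, ?_⟩
  · intro v
    rw [hn]; simp [norm_smul]
  · rw [hn]
    have h1 : (c • li.toContinuousLinearMap).det = c ^ (Module.finrank ℝ E) *
      LinearMap.det (L.toLinearEquiv : E →ₗ[ℝ] E) := by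
      rw [ContinuousLinearMap.det, ← LinearMap.det_smul]
      rfl
    rw [h1, abs_mul, abs_det_isometry, abs_pow, mul_one]
  · refine ⟨L.toContinuousLinearEquiv.trans (ContinuousLinearEquiv.smulLeft (Units.mk0 c hc)), ?_, ?_⟩
    · ext v; simp [hL]
    · refine ⟨c⁻¹, inv_ne_zero hc, L.symm.toLinearIsometry, ?_⟩
      ext v
      change L.symm ((Units.mk0 c hc)⁻¹ • v) = c⁻¹ • L.symm v
      rw [← map_smul]; rfl

lemma open_image [Nontrivial E] {G : Set E} (hG : IsOpen G) {f : E → E} (hinj : InjOn f G)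
    (hconf : ∀ p ∈ G, ConformalAt f p) {p : E} (hp : p ∈ G) {ε : ℝ} (hε : 0 < ε) :
    ∃ δ > 0, ∀ w ∈ ball (f p) δ, ∃ z ∈ G, dist z p < ε ∧ f z = w := by
  obtain ⟨r0, hr0, hr0G⟩ := Metric.isOpen_iff.1 hG p hp
  set r := min r0 ε / 2 with hr
  have hrpos : 0 < r := by positivity
  have hrr0 : r < r0 := by
    have := min_le_left r0 ε
    have : 0 < min r0 ε := by positivity
    linarith
  have hrε : r < ε := by
    have := min_le_right r0 ε
    have : 0 < min r0 ε := by positivity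
    linarith
  have hcG : closedBall p r ⊆ G := (closedBall_subset_ball hrr0).trans hr0G
  have hcont : ContinuousOn f (closedBall p r) := fun z hz =>
    (hconf z (hcG hz)).differentiableAt.continuousAt.continuousWithinAt
  have hm : ∃ m > 0, ∀ z ∈ sphere p r, m ≤ dist (f z) (f p) := by
    have hne : (sphere p r).Nonempty := NormedSpace.sphere_nonempty.2 hrpos.le
    obtain ⟨z, hz, hzmin⟩ := (isCompact_sphere p r).exists_isMinOn hne
      (f := fun z => dist (f z) (f p)) ((continuous_id.dist continuous_const).comp_continuousOn (hcont.mono sphere_subset_closedBall))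
    refine ⟨dist (f z) (f p), ?_, fun y hy => hzmin hy⟩
    apply dist_pos.2
    intro h
    have := hinj (hcG (sphere_subset_closedBall hz)) hp h
    rw [this] at hz
    simp at hz
    linarith
  obtain ⟨m, hm0, hm⟩ := hm
  refine ⟨m / 2, by positivity, fun w hw => ?_⟩
  obtain ⟨z, hz, hzmin⟩ := (isCompact_closedBall p r).exists_isMinOn
    ⟨p, mem_closedBall_self hrpos.le⟩ (f := fun z => ‖f z - w‖ ^ 2)
    ((hcont.sub continuousOn_const).norm.pow 2)
  have h1 : ‖f z - w‖ ^ 2 ≤ ‖f p - w‖ ^ 2 := hzmin (mem_closedBall_self hrpos.le)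
  have h2 : ‖f z - w‖ ≤ ‖f p - w‖ := by
    exact (sq_le_sq₀ (norm_nonneg _) (norm_nonneg _)).1 h1
  rw [mem_ball, dist_comm, dist_eq_norm] at hw
  have hzball : z ∈ ball p r := by
    rcases (mem_closedBall.1 hz).lt_or_eq with h | h
    · exact h
    · exfalso
      have := hm z h
      rw [dist_eq_norm] at this
      have h3 : f z - f p = (f z - w) - (f p - w) := by abel
      have := norm_sub_le (f z - w) (f p - w)
      rw [← h3] at this
      linarith
  have hlm : IsLocalMin (fun z => ‖f z - w‖ ^ 2) z := by
    filter_upwards [isOpen_ball.mem_nhds hzball] with y hy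
    exact hzmin (ball_subset_closedBall hy)
  obtain ⟨f', hf', hc⟩ := hconf z (hcG hz)
  have hd := (hf'.sub_const w).norm_sq
  have h0 := hlm.hasFDerivAt_eq_zero hd
  obtain ⟨_, _, _, e, he, _⟩ := conf_data f' hc
  have h4 := DFunLike.congr_fun h0 (e.symm (f z - w))
  have h5 : f' (e.symm (f z - w)) = f z - w := by
    rw [← he]; simp
  have h6 : (2:ℝ) * inner ℝ (f z - w) (f' (e.symm (f z - w))) = 0 := by
    have h7 : (2 • (innerSL ℝ) (f z - w) ∘SL f') (e.symm (f z - w)) =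
      (2:ℝ) * inner ℝ (f z - w) (f' (e.symm (f z - w))) := by
      rw [smul_apply, ContinuousLinearMap.comp_apply, innerSL_apply_apply]
      simp
    rw [← h7]; exact h4
  rw [h5, real_inner_self_eq_norm_sq] at h6
  have h4 : f z - w = 0 := by
    have : ‖f z - w‖ ^ 2 = 0 := by linarith
    simpa using this
  exact ⟨z, hcG hz, lt_trans hzball hrε, by rwa [sub_eq_zero] at h4⟩

lemma inv_conf [Nontrivial E] {G G' : Set E} (hG : IsOpen G) (hG' : IsOpen G') {f : E → E}
    (hbij : BijOn f G G') (hconf : ∀ p ∈ G, ConformalAt f p) :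
    ∃ g : E → E, BijOn g G' G ∧ (∀ q ∈ G', ConformalAt g q) ∧ InvOn g f G G' := by
  refine ⟨Function.invFunOn f G, ?_, ?_, hbij.invOn_invFunOn⟩
  · exact hbij.symm hbij.invOn_invFunOn.symm
  · intro q hq
    obtain ⟨p, hp, rfl⟩ := hbij.surjOn hq
    have hinv := hbij.invOn_invFunOn
    have hgp : Function.invFunOn f G (f p) = p := hinv.1 hp
    have hc : ContinuousAt (Function.invFunOn f G) (f p) := by
      rw [Metric.continuousAt_iff]
      intro ε hε
      obtain ⟨δ, hδ, h⟩ := open_image hG hbij.injOn hconf hp hε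
      refine ⟨δ, hδ, fun w hw => ?_⟩
      obtain ⟨z, hz, hzp, rfl⟩ := h w hw
      rw [hgp, hinv.1 hz]; exact hzp
    obtain ⟨f', hf', hcf⟩ := hconf p hp
    obtain ⟨_, _, _, e, he, hes⟩ := conf_data f' hcf
    refine ⟨_, HasFDerivAt.of_local_left_inverse (f' := e) hc (by rw [hgp, he]; exact hf') ?_, hes⟩
    filter_upwards [hG'.mem_nhds hq] with y hy
    exact hinv.2 hy
end PartOne

section PartTwo
open MeasureTheory
variable {E : Type*} [NormedAddCommGroup E] [InnerProductSpace ℝ E] [FiniteDimensional ℝ E]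
  [MeasurableSpace E] [BorelSpace E]

lemma ftc_lintegral {h k : ℝ → ℝ} {a b : ℝ} (hab : a ≤ b)
    (hd : ∀ t ∈ Icc a b, DifferentiableAt ℝ h t) (hk : ∀ t ∈ Ioo a b, |deriv h t| ≤ k t) :
    ENNReal.ofReal (h b - h a) ≤ ∫⁻ t in Ioo a b, ENNReal.ofReal (k t) := by
  by_cases htop : ∫⁻ t in Ioo a b, ENNReal.ofReal (k t) = ⊤
  · rw [htop]; exact le_top
  have hle : ∫⁻ t in Ioo a b, ‖deriv h t‖ₑ ≤ ∫⁻ t in Ioo a b, ENNReal.ofReal (k t) := by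
    refine setLIntegral_mono' measurableSet_Ioo fun t ht => ?_
    rw [← ofReal_norm, Real.norm_eq_abs]
    exact ENNReal.ofReal_le_ofReal (hk t ht)
  have hInteg : IntegrableOn (deriv h) (Ioo a b) :=
    ⟨(measurable_deriv h).aestronglyMeasurable, lt_of_le_of_lt hle (lt_top_iff_ne_top.2 htop)⟩
  have hint2 : IntervalIntegrable (deriv h) volume a b := by
    rw [intervalIntegrable_iff_integrableOn_Ioo_of_le hab]; exact hInteg
  have hftc := intervalIntegral.integral_eq_sub_of_hasDerivAt (f := h) (f' := deriv h) (a := a) (b := b)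
    (fun t ht => (hd t (by rwa [uIcc_of_le hab] at ht)).hasDerivAt) hint2
  rw [← hftc, intervalIntegral.integral_of_le hab, integral_Ioc_eq_integral_Ioo]
  refine le_trans ?_ hle
  refine le_trans ?_ (enorm_integral_le_lintegral_enorm _)
  rw [← ofReal_norm]
  exact ENNReal.ofReal_le_ofReal (Real.le_norm_self _)

lemma polar [Nontrivial E] (μ : Measure E) [μ.IsAddHaarMeasure] (F : E → ENNReal)
    (hF : Measurable F) :
    ∫⁻ x, F x ∂μ = ∫⁻ θ : sphere (0:E) 1, ∫⁻ t in Ioi (0:ℝ),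
      ENNReal.ofReal (t ^ (Module.finrank ℝ E - 1)) * F (t • (θ : E)) ∂volume ∂μ.toSphere := by
  have h1 : ∫⁻ x, F x ∂μ = ∫⁻ x : ({(0)}ᶜ : Set E), F x.1 ∂(μ.comap (↑)) := by
    rw [lintegral_subtype_comap (measurableSet_singleton _).compl F, restrict_compl_singleton]
  have h2 := μ.measurePreserving_homeomorphUnitSphereProd.lintegral_comp_emb
        (Homeomorph.measurableEmbedding _)
        (fun p : sphere (0:E) 1 × Ioi (0:ℝ) => F (p.2.1 • (p.1 : E)))
  have h3 : ∀ x : ({(0)}ᶜ : Set E), ((homeomorphUnitSphereProd E x).2.1 •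
    ((homeomorphUnitSphereProd E x).1 : E)) = x.1 := by
    intro x
    have := (homeomorphUnitSphereProd E).symm_apply_apply x
    rw [← homeomorphUnitSphereProd_symm_apply_coe, this]
  simp only [h3] at h2
  have hmeas : Measurable (fun p : sphere (0:E) 1 × Ioi (0:ℝ) => F (p.2.1 • (p.1 : E))) := by
    apply hF.comp
    fun_prop
  rw [h1, h2, lintegral_prod _ hmeas.aemeasurable]
  refine lintegral_congr fun θ => ?_
  rw [Measure.volumeIoiPow, lintegral_withDensity_eq_lintegral_mul]
  · rw [← lintegral_subtype_comap measurableSet_Ioi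
      (fun t : ℝ => ENNReal.ofReal (t ^ (Module.finrank ℝ E - 1)) * F (t • (θ : E)))]
    rfl
  · fun_prop
  · exact hmeas.comp (by fun_prop : Measurable fun r : Ioi (0:ℝ) => (θ, r))

/-- annulus version -/
lemma polar_ann [Nontrivial E] (μ : Measure E) [μ.IsAddHaarMeasure] (F : E → ENNReal)
    (hF : Measurable F) {a b : ℝ} (ha : 0 ≤ a) :
    ∫⁻ x in {x : E | a < ‖x‖ ∧ ‖x‖ < b}, F x ∂μ = ∫⁻ θ : sphere (0:E) 1, ∫⁻ t in Ioo a b,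
      ENNReal.ofReal (t ^ (Module.finrank ℝ E - 1)) * F (t • (θ : E)) ∂volume ∂μ.toSphere := by
  have hS : MeasurableSet {x : E | a < ‖x‖ ∧ ‖x‖ < b} :=
    (measurableSet_lt measurable_const measurable_norm).inter
      (measurableSet_lt measurable_norm measurable_const)
  rw [← lintegral_indicator hS, polar μ _ (hF.indicator hS)]
  refine lintegral_congr fun θ => ?_
  rw [← lintegral_indicator measurableSet_Ioi, ← lintegral_indicator measurableSet_Ioo]
  refine lintegral_congr fun t => ?_
  have hθ : ‖(θ : E)‖ = 1 := by simp
  by_cases ht : 0 < t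
  · have hn : ‖t • (θ : E)‖ = t := by rw [norm_smul, hθ, mul_one, Real.norm_of_nonneg ht.le]
    by_cases h2 : a < t ∧ t < b
    · simp [indicator, ht, h2, hn]
    · simp only [indicator, mem_ofPred_eq, hn, mem_Ioo, mem_Ioi, ht, h2, if_false, if_true, mul_zero]
  · have : ¬ (a < t) := by intro h; exact ht (lt_of_le_of_lt ha h)
    simp [indicator, ht, this]

lemma log_lintegral {a b c : ℝ} (ha : 0 < a) (hab : a ≤ b) (hc : 0 ≤ c) :
    ∫⁻ t in Ioo a b, ENNReal.ofReal (c * t⁻¹) = ENNReal.ofReal (c * Real.log (b / a)) := by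
  have hInteg : IntervalIntegrable (fun t : ℝ => c * t⁻¹) volume a b := by
    apply ContinuousOn.intervalIntegrable
    rw [uIcc_of_le hab]
    exact continuousOn_const.mul (continuousOn_inv₀.mono fun t ht => (lt_of_lt_of_le ha ht.1).ne')
  rw [← ofReal_integral_eq_lintegral_ofReal]
  · rw [← integral_Ioc_eq_integral_Ioo, ← intervalIntegral.integral_of_le hab,
      intervalIntegral.integral_const_mul, integral_inv_of_pos ha (lt_of_lt_of_le ha hab)]
  · exact (intervalIntegrable_iff_integrableOn_Ioo_of_le hab).1 hInteg
  · filter_upwards [ae_restrict_mem measurableSet_Ioo] with t ht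
    have : 0 < t := lt_trans ha ht.1
    simp only [Pi.zero_apply]
    positivity

lemma radial_ann [Nontrivial E] (μ : Measure E) [μ.IsAddHaarMeasure] {a b c : ℝ} (ha : 0 < a)
    (hab : a ≤ b) (hc : 0 ≤ c) :
    ∫⁻ x in {x : E | a < ‖x‖ ∧ ‖x‖ < b}, ENNReal.ofReal (c * (‖x‖ ^ (Module.finrank ℝ E))⁻¹) ∂μ
      = μ.toSphere univ * ENNReal.ofReal (c * Real.log (b / a)) := by
  rw [polar_ann μ _ (by fun_prop) ha.le]
  have : ∀ θ : sphere (0:E) 1, ∫⁻ t in Ioo a b,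
      ENNReal.ofReal (t ^ (Module.finrank ℝ E - 1)) *
        ENNReal.ofReal (c * (‖t • (θ : E)‖ ^ (Module.finrank ℝ E))⁻¹)
      = ENNReal.ofReal (c * Real.log (b / a)) := by
    intro θ
    rw [← log_lintegral ha hab hc]
    refine setLIntegral_congr_fun measurableSet_Ioo fun t ht => ?_
    have ht0 : 0 < t := lt_trans ha ht.1
    have hθ : ‖(θ : E)‖ = 1 := by simp
    rw [norm_smul, hθ, mul_one, Real.norm_of_nonneg ht0.le, ← ENNReal.ofReal_mul (by positivity)]
    congr 1
    obtain ⟨m, hm⟩ : ∃ m, Module.finrank ℝ E = m + 1 :=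
      ⟨_, (Nat.succ_pred_eq_of_pos Module.finrank_pos).symm⟩
    rw [hm, Nat.add_sub_cancel, pow_succ]
    field_simp
  simp only [this, lintegral_const]
  rw [mul_comm]


lemma ray_bound [Nontrivial E] {g : E → E} (hconf : ∀ p ∈ ball (0:E) 1, ConformalAt g p)
    (hne : ∀ x ∈ ball (0:E) 1, x ≠ 0 → g x ≠ 0) {a b : ℝ} (ha : 0 < a) (hab : a ≤ b) (hb : b < 1)
    (θ : E) (hθ : ‖θ‖ = 1) :
    ENNReal.ofReal (Real.log ‖g (b • θ)‖ - Real.log ‖g (a • θ)‖) ≤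
      ∫⁻ t in Ioo a b, ENNReal.ofReal (‖fderiv ℝ g (t • θ)‖ / ‖g (t • θ)‖) := by
  have hnorm : ∀ t ∈ Icc a b, ‖t • θ‖ = t := fun t ht => by
    rw [norm_smul, hθ, mul_one, Real.norm_of_nonneg (ha.le.trans ht.1)]
  have hmem : ∀ t ∈ Icc a b, t • θ ∈ ball (0:E) 1 := fun t ht => by
    rw [mem_ball_zero_iff, hnorm t ht]; exact lt_of_le_of_lt ht.2 hb
  have hg0 : ∀ t ∈ Icc a b, g (t • θ) ≠ 0 := fun t ht => by
    refine hne _ (hmem t ht) ?_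
    rw [← norm_pos_iff, hnorm t ht]; exact lt_of_lt_of_le ha ht.1
  have hder : ∀ t ∈ Icc a b, HasDerivAt (fun t => Real.log ‖g (t • θ)‖)
      ((2 * inner ℝ (g (t • θ)) (fderiv ℝ g (t • θ) θ)) / ‖g (t • θ)‖ ^ 2 / 2) t := by
    intro t ht
    have h1 : HasDerivAt (fun t : ℝ => t • θ) θ t := by
      simpa using (hasDerivAt_id t).smul_const θ
    have h2 := (hconf _ (hmem t ht)).differentiableAt.hasFDerivAt.comp_hasDerivAt t h1
    have h3 := h2.norm_sq
    have h4 := (h3.log (by simpa using hg0 t ht)).div_const 2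
    refine h4.congr_of_eventuallyEq (Filter.Eventually.of_forall fun s => ?_)
    simp [Real.log_pow]
  refine ftc_lintegral (h := fun t => Real.log ‖g (t • θ)‖) hab
    (fun t ht => (hder t ht).differentiableAt) fun t ht => ?_
  have ht' := Ioo_subset_Icc_self ht
  rw [(hder t ht').deriv]
  have hpos : 0 < ‖g (t • θ)‖ := norm_pos_iff.2 (hg0 t ht')
  have h5 := abs_real_inner_le_norm (g (t • θ)) (fderiv ℝ g (t • θ) θ)
  have h6 := (fderiv ℝ g (t • θ)).le_opNorm θ
  rw [hθ, mul_one] at h6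
  have h7 : (2 * inner ℝ (g (t • θ)) (fderiv ℝ g (t • θ) θ)) / ‖g (t • θ)‖ ^ 2 / 2 =
    inner ℝ (g (t • θ)) (fderiv ℝ g (t • θ) θ) / ‖g (t • θ)‖ ^ 2 := by ring
  rw [h7, abs_div, abs_of_pos (by positivity : 0 < ‖g (t • θ)‖ ^ 2), div_le_div_iff₀ (by positivity) hpos]
  calc _ ≤ (‖g (t • θ)‖ * ‖fderiv ℝ g (t • θ)‖) * ‖g (t • θ)‖ := by
        gcongr
        exact h5.trans (by gcongr)
    _ = _ := by ring

lemma young_pt {N : ℕ} (hN : 1 ≤ N) {t X : ℝ} (ht : 0 < t) (hX : 0 ≤ X) :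
    X ≤ t ^ (N - 1) * (X ^ N / N) + (1 - 1 / (N:ℝ)) * t⁻¹ := by
  obtain ⟨m, rfl⟩ : ∃ m, N = m + 1 := ⟨N - 1, by omega⟩
  have h := one_add_mul_le_pow (a := t * X - 1) (by nlinarith [mul_nonneg ht.le hX]) (m + 1)
  rw [add_sub_cancel, mul_pow] at h
  rw [Nat.add_sub_cancel]
  have hN0 : (0:ℝ) < ((m + 1 : ℕ) : ℝ) := by positivity
  set M : ℝ := ((m + 1 : ℕ) : ℝ)
  rw [← mul_le_mul_iff_right₀ (mul_pos ht hN0)]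
  have : t * M * (t ^ m * (X ^ (m + 1) / M) + (1 - 1 / M) * t⁻¹) = t ^ (m + 1) * X ^ (m + 1) + (M - 1) := by
    field_simp
    ring
  rw [this]
  linarith

lemma energy [Nontrivial E] (μ : Measure E) [μ.IsAddHaarMeasure] {g : E → E}
    (hconf : ∀ p ∈ ball (0:E) 1, ConformalAt g p) (hinj : InjOn g (ball 0 1))
    (hmaps : MapsTo g (ball 0 1) (ball 0 1)) {a b ma : ℝ} (hb : b < 1)
    (hma0 : 0 < ma) (hma1 : ma ≤ 1) (hma : ∀ x : E, a < ‖x‖ → ‖x‖ < 1 → ma < ‖g x‖) :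
    ∫⁻ x in {x : E | a < ‖x‖ ∧ ‖x‖ < b}, ENNReal.ofReal ((‖fderiv ℝ g x‖ / ‖g x‖) ^ (Module.finrank ℝ E)
      / (Module.finrank ℝ E)) ∂μ ≤ μ.toSphere univ *
        ENNReal.ofReal (1 / (Module.finrank ℝ E) * Real.log (1 / ma)) := by
  have hS : MeasurableSet {x : E | a < ‖x‖ ∧ ‖x‖ < b} :=
    (measurableSet_lt measurable_const measurable_norm).inter
      (measurableSet_lt measurable_norm measurable_const)
  have hSb : {x : E | a < ‖x‖ ∧ ‖x‖ < b} ⊆ ball 0 1 := fun x hx => by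
    rw [mem_ball_zero_iff]; exact hx.2.trans hb
  rw [← radial_ann μ hma0 hma1 (by positivity)]
  calc _ = ∫⁻ x in {x : E | a < ‖x‖ ∧ ‖x‖ < b}, ENNReal.ofReal |(fderiv ℝ g x).det| *
        ENNReal.ofReal (1 / (Module.finrank ℝ E) * (‖g x‖ ^ (Module.finrank ℝ E))⁻¹) ∂μ := by
        refine setLIntegral_congr_fun hS fun x hx => ?_
        have h := conf_data (fderiv ℝ g x)
          (conformalAt_iff_isConformalMap_fderiv.1 (hconf x (hSb hx)))
        rw [h.2.2.1, ← ENNReal.ofReal_mul (by positivity)]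
        congr 1
        rw [div_pow]
        ring
    _ = ∫⁻ x in g '' {x : E | a < ‖x‖ ∧ ‖x‖ < b},
        ENNReal.ofReal (1 / (Module.finrank ℝ E) * (‖x‖ ^ (Module.finrank ℝ E))⁻¹) ∂μ := by
        rw [lintegral_image_eq_lintegral_abs_det_fderiv_mul μ hS (f' := fderiv ℝ g)
          (fun x hx => (hconf x (hSb hx)).differentiableAt.hasFDerivAt.hasFDerivWithinAt)
          (hinj.mono hSb)]
    _ ≤ _ := by
        refine lintegral_mono_set ?_
        rintro _ ⟨x, hx, rfl⟩
        refine ⟨hma x hx.1 (hx.2.trans hb), ?_⟩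
        have := hmaps (hSb hx)
        rwa [mem_ball_zero_iff] at this

lemma key [Nontrivial E] {g : E → E} (hgm : Measurable g)
    (hconf : ∀ p ∈ ball (0:E) 1, ConformalAt g p) (hinj : InjOn g (ball 0 1))
    (hmaps : MapsTo g (ball 0 1) (ball 0 1)) (hg0 : g 0 = 0)
    {a b ma Ma mb : ℝ} (ha : 0 < a) (hab : a ≤ b) (hb : b < 1)
    (hma0 : 0 < ma) (hma1 : ma ≤ 1) (hma : ∀ x : E, a < ‖x‖ → ‖x‖ < 1 → ma < ‖g x‖)
    (hMa : ∀ x : E, ‖x‖ = a → ‖g x‖ ≤ Ma) (hmb0 : 0 < mb) (hmb : ∀ x : E, ‖x‖ = b → mb ≤ ‖g x‖) :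
    Real.log mb - Real.log Ma ≤ 1 / (Module.finrank ℝ E) * Real.log (1 / ma) +
      (1 - 1 / (Module.finrank ℝ E : ℝ)) * Real.log (b / a) := by
  set N := Module.finrank ℝ E with hN
  have hN1 : 1 ≤ N := Module.finrank_pos
  have hNr : (1:ℝ) ≤ N := by exact_mod_cast hN1
  have hc : 0 ≤ 1 - 1 / (N:ℝ) := by
    rw [sub_nonneg, div_le_one (by positivity)]; exact hNr
  have hne : ∀ x ∈ ball (0:E) 1, x ≠ 0 → g x ≠ 0 := by
    intro x hx hx0 h
    exact hx0 (hinj hx (mem_ball_self one_pos) (by rw [h, hg0]))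
  let μ : Measure E := Measure.addHaar
  let F : E → ENNReal := fun x => ENNReal.ofReal ((‖fderiv ℝ g x‖ / ‖g x‖) ^ N / N)
  have hF : Measurable F := by
    have := measurable_fderiv ℝ g
    fun_prop
  have hω0 : μ.toSphere univ ≠ 0 := by
    rw [Measure.measure_univ_ne_zero]; exact Measure.toSphere_ne_zero μ
  have hωt : μ.toSphere univ ≠ ⊤ := measure_ne_top _ _
  have h1 : μ.toSphere univ * ENNReal.ofReal (Real.log mb - Real.log Ma) ≤
      μ.toSphere univ * ENNReal.ofReal (1 / N * Real.log (1 / ma)) +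
      μ.toSphere univ * ENNReal.ofReal ((1 - 1 / (N:ℝ)) * Real.log (b / a)) := by
    calc μ.toSphere univ * ENNReal.ofReal (Real.log mb - Real.log Ma)
        = ∫⁻ θ : sphere (0:E) 1, ENNReal.ofReal (Real.log mb - Real.log Ma) ∂μ.toSphere := by
          rw [lintegral_const, mul_comm]
      _ ≤ ∫⁻ θ : sphere (0:E) 1, ((∫⁻ t in Ioo a b, ENNReal.ofReal (t ^ (N - 1)) * F (t • (θ : E))) +
            ENNReal.ofReal ((1 - 1 / (N:ℝ)) * Real.log (b / a))) ∂μ.toSphere := by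
          refine lintegral_mono fun θ => ?_
          have hθ : ‖(θ : E)‖ = 1 := by simp
          have hna : ‖a • (θ:E)‖ = a := by rw [norm_smul, hθ, mul_one, Real.norm_of_nonneg ha.le]
          have hnb : ‖b • (θ:E)‖ = b := by
            rw [norm_smul, hθ, mul_one, Real.norm_of_nonneg (ha.le.trans hab)]
          have hga : 0 < ‖g (a • (θ:E))‖ := by
            refine norm_pos_iff.2 (hne _ ?_ ?_)
            · rw [mem_ball_zero_iff, hna]; linarith
            · rw [← norm_pos_iff, hna]; exact ha
          calc ENNReal.ofReal (Real.log mb - Real.log Ma)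
              ≤ ENNReal.ofReal (Real.log ‖g (b • (θ:E))‖ - Real.log ‖g (a • (θ:E))‖) := by
                apply ENNReal.ofReal_le_ofReal
                have := Real.log_le_log hmb0 (hmb _ hnb)
                have := Real.log_le_log hga (hMa _ hna)
                linarith
            _ ≤ _ := ray_bound hconf hne ha hab hb θ hθ
            _ ≤ ∫⁻ t in Ioo a b, (ENNReal.ofReal (t ^ (N - 1)) * F (t • (θ : E)) +
                ENNReal.ofReal ((1 - 1 / (N:ℝ)) * t⁻¹)) := by
                refine setLIntegral_mono' measurableSet_Ioo fun t ht => ?_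
                have ht0 : 0 < t := ha.trans ht.1
                simp only [F]
                rw [← ENNReal.ofReal_mul (by positivity), ← ENNReal.ofReal_add (by positivity)
                  (by positivity)]
                exact ENNReal.ofReal_le_ofReal (young_pt hN1 ht0 (by positivity))
            _ = _ := by
                rw [lintegral_add_right _ (by fun_prop), log_lintegral ha hab hc]
      _ = _ := by
          rw [lintegral_add_right _ measurable_const, ← polar_ann μ F hF ha.le, lintegral_const,
            mul_comm (ENNReal.ofReal _)]
      _ ≤ _ := by
          gcongr
          exact energy μ hconf hinj hmaps hb hma0 hma1 hma
  have hB : 0 ≤ 1 / (N:ℝ) * Real.log (1 / ma) := by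
    have : 0 ≤ Real.log (1 / ma) := Real.log_nonneg (by rw [le_div_iff₀ hma0]; linarith)
    positivity
  have hC : 0 ≤ (1 - 1 / (N:ℝ)) * Real.log (b / a) := by
    have : 0 ≤ Real.log (b / a) := Real.log_nonneg (by rw [le_div_iff₀ ha]; linarith)
    positivity
  rw [← mul_add, ENNReal.mul_le_mul_iff_right hω0 hωt, ← ENNReal.ofReal_add hB hC,
    ENNReal.ofReal_le_ofReal_iff (by positivity)] at h1
  exact h1
end PartTwo

section PartFour
variable {E : Type*} [NormedAddCommGroup E] [InnerProductSpace ℝ E] [FiniteDimensional ℝ E]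

lemma schwarz_lower_meas [MeasurableSpace E] [BorelSpace E] (hdim : 2 ≤ Module.finrank ℝ E) {g : E → E}
    (hgm : Measurable g) (hbij : BijOn g (ball 0 1) (ball 0 1))
    (hconf : ∀ p ∈ ball (0:E) 1, ConformalAt g p) (hg0 : g 0 = 0) : 1 ≤ ‖fderiv ℝ g 0‖ := by
  have : Nontrivial E := Module.nontrivial_of_finrank_pos (R := ℝ) (by omega)
  obtain ⟨k, hkbij, hkconf, hinv⟩ := inv_conf isOpen_ball isOpen_ball hbij hconf
  have h0 : (0:E) ∈ ball (0:E) 1 := mem_ball_self one_pos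
  have hk0 : k 0 = 0 := by have := hinv.1 h0; rwa [hg0] at this
  obtain ⟨hl0, hlv, -, -⟩ := conf_data (fderiv ℝ g 0) (conformalAt_iff_isConformalMap_fderiv.1 (hconf 0 h0))
  set l := ‖fderiv ℝ g 0‖ with hl
  set N := Module.finrank ℝ E with hN
  have hNr : (2:ℝ) ≤ N := by exact_mod_cast hdim
  have hkcont : ContinuousOn k (ball 0 1) := fun z hz =>
    (hkconf z hz).differentiableAt.continuousAt.continuousWithinAt
  -- properness
  have hprop : ∀ c : ℝ, 0 < c → c < 1 → ∃ r < 1, ∀ x : E, r < ‖x‖ → ‖x‖ < 1 → c ≤ ‖g x‖ := by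
    intro c hc0 hc
    have hsub : closedBall (0:E) c ⊆ ball 0 1 := closedBall_subset_ball hc
    obtain ⟨z, hz, hzmax⟩ := (isCompact_closedBall (0:E) c).exists_isMaxOn
      ⟨0, mem_closedBall_self hc0.le⟩ (f := fun z => ‖k z‖) (hkcont.mono hsub).norm
    refine ⟨‖k z‖, ?_, fun x hx hx1 => ?_⟩
    · have := hkbij.mapsTo (hsub hz)
      rwa [mem_ball_zero_iff] at this
    · by_contra hcon
      push Not at hcon
      have h1 : g x ∈ closedBall (0:E) c := by
        rw [mem_closedBall_zero_iff]; exact hcon.le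
      have h2 : ‖k (g x)‖ ≤ ‖k z‖ := hzmax h1
      rw [hinv.1 (by rwa [mem_ball_zero_iff])] at h2
      linarith
  have hmain : ∀ δ : ℝ, 0 < δ → δ < l → 0 ≤ Real.log (l + δ) - 1 / N * Real.log (l - δ) := by
    intro δ hδ hδl
    have hB : ∃ r0 > 0, ∀ x : E, ‖x‖ < r0 → (l - δ) * ‖x‖ ≤ ‖g x‖ ∧ ‖g x‖ ≤ (l + δ) * ‖x‖ := by
      have hlo := (hconf 0 h0).differentiableAt.hasFDerivAt.isLittleO
      have := hlo.def hδ
      obtain ⟨r0, hr0, h⟩ := Metric.eventually_nhds_iff.1 this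
      refine ⟨r0, hr0, fun x hx => ?_⟩
      have h1 := h (y := x) (by simpa using hx)
      simp only [hg0, sub_zero] at h1
      have h2 := norm_sub_norm_le (g x) (fderiv ℝ g 0 x)
      have h3 := norm_sub_norm_le (fderiv ℝ g 0 x) (g x)
      rw [norm_sub_rev] at h3
      rw [hlv] at h2 h3
      constructor <;> linarith
    obtain ⟨r0, hr0, hB⟩ := hB
    have hC : ∃ c0 > 0, ∀ x : E, r0 ≤ ‖x‖ → ‖x‖ < 1 → c0 ≤ ‖g x‖ := by
      have hkc : ContinuousAt k 0 := (hkconf 0 h0).differentiableAt.continuousAt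
      obtain ⟨c0, hc0, h⟩ := Metric.continuousAt_iff.1 hkc r0 hr0
      refine ⟨c0, hc0, fun x hx hx1 => ?_⟩
      by_contra hcon
      push Not at hcon
      have h1 := h (x := g x) (by simpa using hcon)
      rw [hinv.1 (by rwa [mem_ball_zero_iff]), hk0, dist_zero_right] at h1
      linarith
    obtain ⟨c0, hc0, hC⟩ := hC
    have hld : 0 < l - δ := by linarith
    obtain ⟨a, ha0, ha⟩ : ∃ a > 0, a < 1 ∧ a < r0 ∧ (l - δ) * a < c0 ∧ (l - δ) * a < 1 := by
      have : ∀ᶠ a : ℝ in nhdsWithin 0 (Ioi 0), a < 1 ∧ a < r0 ∧ (l - δ) * a < c0 ∧ (l - δ) * a < 1 := by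
        have ht : Filter.Tendsto (fun a : ℝ => (l - δ) * a) (nhdsWithin 0 (Ioi 0)) (nhds 0) := by
          have : Continuous fun a : ℝ => (l - δ) * a := by fun_prop
          have := this.tendsto 0
          rw [mul_zero] at this
          exact this.mono_left nhdsWithin_le_nhds
        have hi : Filter.Tendsto (fun a : ℝ => a) (nhdsWithin 0 (Ioi 0)) (nhds 0) :=
          Filter.tendsto_id.mono_left nhdsWithin_le_nhds
        exact (hi.eventually_lt_const one_pos).and ((hi.eventually_lt_const hr0).and
          ((ht.eventually_lt_const hc0).and (ht.eventually_lt_const one_pos)))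
      obtain ⟨a, h1, h2⟩ := (this.and self_mem_nhdsWithin).exists
      exact ⟨a, h2, h1⟩
    obtain ⟨ha1, har, hac, hal⟩ := ha
    rw [← Real.exp_le_exp, Real.exp_zero]
    refine le_of_forall_lt fun c hc => ?_
    by_contra hcon
    push Not at hcon
    have hcpos : 0 < c := (Real.exp_pos _).trans_le hcon
    -- use a slightly larger number
    obtain ⟨c', hcc', hc'1⟩ := exists_between hc
    obtain ⟨r, hr1, hr⟩ := hprop c' (hcpos.trans hcc') hc'1
    obtain ⟨b, hb, hb1⟩ := exists_between (max_lt hr1 ha1)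
    have hbr : r < b := (le_max_left _ _).trans_lt hb
    have hba : a < b := (le_max_right _ _).trans_lt hb
    have hk := key hgm hconf hbij.injOn hbij.mapsTo hg0 (a := a) (b := b) (ma := (l - δ) * a)
      (Ma := (l + δ) * a) (mb := c') ha0 hba.le hb1 (by positivity) hal.le
      (fun x hx hx1 => by
        rcases lt_or_ge ‖x‖ r0 with h | h
        · refine lt_of_lt_of_le ?_ (hB x h).1
          gcongr
        · exact hac.trans_le (hC x h hx1))
      (fun x hx => by rw [← hx]; exact (hB x (by rw [hx]; exact har)).2)
      (hcpos.trans hcc')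
      (fun x hx => hr x (by rw [hx]; exact hbr) (by rw [hx]; exact hb1))
    rw [← hN, one_div ((l - δ) * a), Real.log_inv, Real.log_mul hld.ne' ha0.ne',
      Real.log_mul (by positivity) ha0.ne', Real.log_div (by linarith) ha0.ne'] at hk
    have hlb : Real.log b ≤ 0 := Real.log_nonpos (by linarith) hb1.le
    have hcoef : 0 ≤ 1 - 1 / (N:ℝ) := by
      rw [sub_nonneg, div_le_one (by positivity)]; linarith
    have h5 := mul_nonneg hcoef (neg_nonneg.2 hlb)
    have h6 : Real.log c' ≤ Real.log (l + δ) - 1 / N * Real.log (l - δ) := by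
      nlinarith
    have h7 := Real.exp_le_exp.2 h6
    rw [Real.exp_log (hcpos.trans hcc')] at h7
    linarith
  have hlim : 0 ≤ Real.log l - 1 / N * Real.log l := by
    have ht : Filter.Tendsto (fun δ : ℝ => Real.log (l + δ) - 1 / N * Real.log (l - δ))
        (nhdsWithin 0 (Ioi 0)) (nhds (Real.log l - 1 / N * Real.log l)) := by
      have : ContinuousAt (fun δ : ℝ => Real.log (l + δ) - 1 / N * Real.log (l - δ)) 0 := by
        apply ContinuousAt.sub
        · exact ContinuousAt.log (by fun_prop) (by simpa using hl0.ne')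
        · exact continuousAt_const.mul (ContinuousAt.log (by fun_prop) (by simpa using hl0.ne'))
      have := this.tendsto
      simp only [add_zero, sub_zero] at this
      exact this.mono_left nhdsWithin_le_nhds
    refine ge_of_tendsto ht ?_
    have hi : Filter.Tendsto (fun a : ℝ => a) (nhdsWithin 0 (Ioi 0)) (nhds 0) :=
      Filter.tendsto_id.mono_left nhdsWithin_le_nhds
    filter_upwards [self_mem_nhdsWithin, hi.eventually_lt_const hl0] with δ h1 h2
    exact hmain δ h1 h2
  by_contra hcon
  push Not at hcon
  have h1 : Real.log l < 0 := Real.log_neg hl0 hcon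
  have h2 : 1 / (N:ℝ) < 1 := by rw [div_lt_one (by positivity)]; linarith
  nlinarith

lemma schwarz_lower (hdim : 2 ≤ Module.finrank ℝ E) {g : E → E}
    (hbij : BijOn g (ball 0 1) (ball 0 1))
    (hconf : ∀ p ∈ ball (0:E) 1, ConformalAt g p) (hg0 : g 0 = 0) : 1 ≤ ‖fderiv ℝ g 0‖ := by
  classical
  let _ : MeasurableSpace E := borel E
  have _ : BorelSpace E := ⟨rfl⟩
  have heq : EqOn ((ball (0:E) 1).indicator g) g (ball 0 1) := fun x hx => indicator_of_mem hx g
  have h0 : (0:E) ∈ ball (0:E) 1 := mem_ball_self one_pos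
  have hm : Measurable ((ball (0:E) 1).indicator g) := by
    have := ContinuousOn.measurable_piecewise (s := ball (0:E) 1) (f := g) (g := fun _ => 0)
      (fun z hz => (hconf z hz).differentiableAt.continuousAt.continuousWithinAt)
      continuousOn_const measurableSet_ball
    rw [← piecewise_eq_indicator]
    exact this
  have := schwarz_lower_meas hdim hm (heq.bijOn_iff.2 hbij)
    (fun p hp => (hconf p hp).congr hp isOpen_ball heq) (by rw [heq h0, hg0])
  have h2 : (ball (0:E) 1).indicator g =ᶠ[nhds 0] g := heq.eventuallyEq_of_mem (isOpen_ball.mem_nhds h0)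
  rwa [h2.fderiv_eq] at this

lemma schwarz_upper (hdim : 2 ≤ Module.finrank ℝ E) {g : E → E}
    (hbij : BijOn g (ball 0 1) (ball 0 1))
    (hconf : ∀ p ∈ ball (0:E) 1, ConformalAt g p) (hg0 : g 0 = 0) : ‖fderiv ℝ g 0‖ ≤ 1 := by
  have : Nontrivial E := Module.nontrivial_of_finrank_pos (R := ℝ) (by omega)
  obtain ⟨k, hkbij, hkconf, hinv⟩ := inv_conf isOpen_ball isOpen_ball hbij hconf
  have h0 : (0:E) ∈ ball (0:E) 1 := mem_ball_self one_pos
  have hk0 : k 0 = 0 := by have := hinv.1 h0; rwa [hg0] at this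
  have h1 := schwarz_lower hdim hkbij hkconf hk0
  obtain ⟨hl0, hlv, -, -⟩ := conf_data (fderiv ℝ g 0) (conformalAt_iff_isConformalMap_fderiv.1 (hconf 0 h0))
  obtain ⟨hk0', hkv, -, -⟩ := conf_data (fderiv ℝ k 0) (conformalAt_iff_isConformalMap_fderiv.1 (hkconf 0 h0))
  have hgd := (hconf 0 h0).differentiableAt.hasFDerivAt
  have hkd := (hkconf 0 h0).differentiableAt.hasFDerivAt
  rw [← hk0] at hgd
  have hc := hgd.comp 0 hkd
  have hid : HasFDerivAt (g ∘ k) (ContinuousLinearMap.id ℝ E) 0 := by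
    refine (hasFDerivAt_id (0:E)).congr_of_eventuallyEq ?_
    filter_upwards [isOpen_ball.mem_nhds h0] with y hy
    exact hinv.2 hy
  have heq := hc.unique hid
  obtain ⟨v, hv⟩ := exists_ne (0:E)
  have h2 := DFunLike.congr_fun heq v
  have h3 := congrArg norm h2
  rw [hk0] at h3
  simp only [ContinuousLinearMap.comp_apply, ContinuousLinearMap.id_apply, hlv, hkv] at h3
  have hv' : 0 < ‖v‖ := norm_pos_iff.2 hv
  have h4 : ‖fderiv ℝ g 0‖ * ‖fderiv ℝ k 0‖ = 1 := by
    have : (‖fderiv ℝ g 0‖ * ‖fderiv ℝ k 0‖) * ‖v‖ = 1 * ‖v‖ := by linarith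
    exact mul_right_cancel₀ hv'.ne' this
  nlinarith
end PartFour

section PartFive
variable {E : Type*} [NormedAddCommGroup E] [InnerProductSpace ℝ E] [FiniteDimensional ℝ E]

/-- Moebius-type maps between the regions where the two weight functions are positive. -/
def Mob (δ δ' : E → ℝ) (T : E → E) : Prop :=
  BijOn T {x | 0 < δ x} {x | 0 < δ' x} ∧ (∀ p, 0 < δ p → ConformalAt T p) ∧
  (∀ p, 0 < δ p → δ' (T p) = ‖fderiv ℝ T p‖ * δ p) ∧
  ∀ p q, 0 < δ p → 0 < δ q → ‖T p - T q‖ ^ 2 = ‖fderiv ℝ T p‖ * ‖fderiv ℝ T q‖ * ‖p - q‖ ^ 2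

noncomputable def dB (x : E) : ℝ := (1 - ‖x‖ ^ 2) / 2

lemma dB_pos_iff (x : E) : 0 < dB x ↔ x ∈ ball (0:E) 1 := by
  rw [dB, mem_ball_zero_iff]
  constructor
  · intro h; nlinarith [norm_nonneg x]
  · intro h; nlinarith [norm_nonneg x]

lemma dB_set : {x : E | 0 < dB x} = ball (0:E) 1 := by
  ext x; exact dB_pos_iff x

lemma mob_id [Nontrivial E] (δ : E → ℝ) : Mob δ δ id := by
  refine ⟨bijOn_id _, fun p _ => conformalAt_id p, fun p _ => ?_, fun p q _ _ => ?_⟩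
  · simp [fderiv_id]
  · simp [fderiv_id]

open EuclideanGeometry in
lemma mob_inversion [Nontrivial E] (δ δ' : E → ℝ) (c : E) (R : ℝ) (hR : R ≠ 0) (hc : δ c ≤ 0) (hc' : δ' c ≤ 0)
    (h : ∀ p, p ≠ c → δ' (inversion c R p) = (R / dist p c) ^ 2 * δ p) : Mob δ δ' (inversion c R) := by
  have hne : ∀ p, 0 < δ p → p ≠ c := fun p hp h => by rw [h] at hp; linarith
  have hne' : ∀ p, 0 < δ' p → p ≠ c := fun p hp h => by rw [h] at hp; linarith
  have hpos : ∀ p, p ≠ c → 0 < (R / dist p c) ^ 2 := fun p hp => by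
    have := dist_pos.2 hp
    positivity
  have hf : ∀ p, p ≠ c → ‖fderiv ℝ (inversion c R) p‖ = (R / dist p c) ^ 2 ∧ ConformalAt (inversion c R) p := by
    intro p hp
    have hd := hasFDerivAt_inversion (R := R) hp
    have hcm : IsConformalMap ((R / dist p c) ^ 2 •
      ((Submodule.span ℝ {p - c})ᗮ.reflection : E →L[ℝ] E)) :=
      ⟨(R / dist p c) ^ 2, (hpos p hp).ne', (Submodule.span ℝ {p - c})ᗮ.reflection.toLinearIsometry, rfl⟩
    refine ⟨?_, ⟨_, hd, hcm⟩⟩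
    rw [hd.fderiv, norm_smul, Real.norm_of_nonneg (hpos p hp).le]
    have : ‖((Submodule.span ℝ {p - c})ᗮ.reflection : E →L[ℝ] E)‖ = 1 :=
      (Submodule.span ℝ {p - c})ᗮ.reflection.toLinearIsometry.norm_toContinuousLinearMap
    rw [this, mul_one]
  refine ⟨?_, fun p hp => (hf p (hne p hp)).2, fun p hp => ?_, fun p q hp hq => ?_⟩
  · refine ⟨fun p hp => ?_, (inversion_injective c hR).injOn, fun q hq => ?_⟩
    · have hp' : 0 < δ p := hp
      change 0 < δ' _
      rw [h p (hne p hp')]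
      exact mul_pos (hpos p (hne p hp')) hp'
    · have hq' : 0 < δ' q := hq
      have hqc := hne' q hq'
      have hTq : inversion c R q ≠ c := by rw [Ne, inversion_eq_center hR]; exact hqc
      refine ⟨inversion c R q, ?_, inversion_inversion c hR q⟩
      have h2 := h _ hTq
      rw [inversion_inversion c hR] at h2
      rw [h2] at hq'
      exact (mul_pos_iff_of_pos_left (hpos _ hTq)).1 hq'
  · rw [(hf p (hne p hp)).1, h p (hne p hp)]
  · rw [(hf p (hne p hp)).1, (hf q (hne q hq)).1, ← dist_eq_norm, ← dist_eq_norm,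
      dist_inversion_inversion (hne p hp) (hne q hq)]
    have := dist_pos.2 (hne p hp)
    have := dist_pos.2 (hne q hq)
    field_simp

lemma inv_norm_sq {c p : E} (R : ℝ) (hp : p ≠ c) : ‖EuclideanGeometry.inversion c R p‖ ^ 2 =
    ‖c‖ ^ 2 + (R / dist p c) ^ 2 * (2 * inner ℝ c p - 2 * ‖c‖ ^ 2) + (R / dist p c) ^ 2 * R ^ 2 := by
  have hd : 0 < dist p c := dist_pos.2 hp
  have : EuclideanGeometry.inversion c R p = (R / dist p c) ^ 2 • (p - c) + c := rfl
  rw [this, norm_add_sq_real, norm_smul, Real.norm_of_nonneg (by positivity), real_inner_smul_left,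
    inner_sub_left, real_inner_self_eq_norm_sq, ← dist_eq_norm, real_inner_comm]
  field_simp
  ring

lemma mob_move [Nontrivial E] {z : E} (hz : z ∈ ball (0:E) 1) :
    ∃ M : E → E, Mob dB dB M ∧ M 0 = z ∧ M z = 0 := by
  by_cases hz0 : z = 0
  · subst hz0
    exact ⟨id, mob_id _, rfl, rfl⟩
  have hzp : 0 < ‖z‖ := norm_pos_iff.2 hz0
  rw [mem_ball_zero_iff] at hz
  set c : E := (‖z‖ ^ 2)⁻¹ • z with hc
  have hcn : ‖c‖ = ‖z‖⁻¹ := by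
    rw [hc, norm_smul, Real.norm_of_nonneg (by positivity)]; field_simp
  have hc1 : 1 < ‖c‖ := by rw [hcn]; exact (one_lt_inv₀ hzp).2 hz
  have hR2 : 0 < ‖c‖ ^ 2 - 1 := by nlinarith
  set R := Real.sqrt (‖c‖ ^ 2 - 1) with hR
  have hRR : R ^ 2 = ‖c‖ ^ 2 - 1 := Real.sq_sqrt hR2.le
  have hR0 : R ≠ 0 := (Real.sqrt_pos.2 hR2).ne'
  have hM0 : EuclideanGeometry.inversion c R 0 = z := by
    have : EuclideanGeometry.inversion c R 0 = (R / dist 0 c) ^ 2 • (0 - c) + c := rfl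
    rw [this, dist_zero_left, div_pow, hRR, zero_sub, smul_neg, ← sub_eq_neg_add]
    have h1 : c - ((‖c‖ ^ 2 - 1) / ‖c‖ ^ 2) • c = (1 - (‖c‖ ^ 2 - 1) / ‖c‖ ^ 2) • c := by
      rw [sub_smul, one_smul]
    rw [h1, hcn, hc, smul_smul]
    have : (1 - (‖z‖⁻¹ ^ 2 - 1) / ‖z‖⁻¹ ^ 2) * (‖z‖ ^ 2)⁻¹ = 1 := by field_simp; ring
    rw [this, one_smul]
  refine ⟨EuclideanGeometry.inversion c R, mob_inversion _ _ c R hR0 ?_ ?_ ?_, hM0, ?_⟩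
  · unfold dB; linarith
  · unfold dB; linarith
  · intro p hp
    have hd : 0 < dist p c := dist_pos.2 hp
    unfold dB
    rw [inv_norm_sq R hp]
    have h1 : ‖p‖ ^ 2 = dist p c ^ 2 + 2 * inner ℝ c p - ‖c‖ ^ 2 := by
      rw [dist_eq_norm, norm_sub_sq_real, real_inner_comm]; ring
    have h2 : (R / dist p c) ^ 2 * dist p c ^ 2 = R ^ 2 := by field_simp
    rw [h1]
    generalize (R / dist p c) ^ 2 = κ at *
    generalize dist p c ^ 2 = D at *
    rw [hRR] at h2 ⊢
    linear_combination (-1 / 2) * h2 * (-1)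
  · rw [← hM0]; exact EuclideanGeometry.inversion_inversion c hR0 0

lemma mob_cayley [Nontrivial E] {e : E} (he : ‖e‖ = 1) :
    Mob (fun x => inner ℝ e x) dB (EuclideanGeometry.inversion (-e) (Real.sqrt 2)) ∧
    Mob dB (fun x => inner ℝ e x) (EuclideanGeometry.inversion (-e) (Real.sqrt 2)) := by
  have hR0 : Real.sqrt 2 ≠ 0 := by positivity
  have hRR : Real.sqrt 2 ^ 2 = 2 := Real.sq_sqrt (by norm_num)
  have h1 : (inner ℝ e (-e) : ℝ) ≤ 0 := by
    rw [inner_neg_right, real_inner_self_eq_norm_sq, he]; norm_num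
  have h2 : dB (-e) ≤ 0 := by unfold dB; rw [norm_neg, he]; norm_num
  constructor
  · refine mob_inversion _ _ _ _ hR0 h1 h2 fun p hp => ?_
    unfold dB
    rw [inv_norm_sq _ hp, hRR, norm_neg, he, inner_neg_left]
    ring
  · refine mob_inversion _ _ _ _ hR0 h2 h1 fun p hp => ?_
    have hd : 0 < dist p (-e) := dist_pos.2 hp
    have : EuclideanGeometry.inversion (-e) (Real.sqrt 2) p =
      (Real.sqrt 2 / dist p (-e)) ^ 2 • (p - -e) + -e := rfl
    rw [this, inner_add_right, inner_smul_right, inner_sub_right, inner_neg_right,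
      real_inner_self_eq_norm_sq, he]
    unfold dB
    have h3 : dist p (-e) ^ 2 = ‖p‖ ^ 2 + 2 * inner ℝ e p + 1 := by
      rw [dist_eq_norm, sub_neg_eq_add, norm_add_sq_real, he, real_inner_comm]; ring
    have h4 : (Real.sqrt 2 / dist p (-e)) ^ 2 * dist p (-e) ^ 2 = 2 := by
      rw [div_pow, hRR]; field_simp
    rw [h3] at h4
    linear_combination (1 / 2) * h4
end PartFive

section PartSix
variable {E : Type*} [NormedAddCommGroup E] [InnerProductSpace ℝ E] [FiniteDimensional ℝ E]

lemma norm_fderiv_comp' [Nontrivial E] {f g : E → E} {p : E} (hg : ConformalAt g p)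
    (hf : ConformalAt f (g p)) :
    ConformalAt (f ∘ g) p ∧ ‖fderiv ℝ (f ∘ g) p‖ = ‖fderiv ℝ f (g p)‖ * ‖fderiv ℝ g p‖ := by
  have hfg : ConformalAt (f ∘ g) p := hf.comp p hg
  refine ⟨hfg, ?_⟩
  obtain ⟨v, hv⟩ := exists_ne (0:E)
  have h1 := (conf_data _ (conformalAt_iff_isConformalMap_fderiv.1 hfg)).2.1 v
  have h2 := (conf_data _ (conformalAt_iff_isConformalMap_fderiv.1 hg)).2.1 v
  have h3 := (conf_data _ (conformalAt_iff_isConformalMap_fderiv.1 hf)).2.1 (fderiv ℝ g p v)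
  rw [fderiv_comp p hf.differentiableAt hg.differentiableAt] at h1 ⊢
  rw [ContinuousLinearMap.comp_apply, h3, h2, ← mul_assoc] at h1
  exact (mul_right_cancel₀ (norm_ne_zero_iff.2 hv) h1).symm

lemma dB_zero : dB (0:E) = 1 / 2 := by simp [dB]

lemma pick (hdim : 2 ≤ Module.finrank ℝ E) {g : E → E}
    (hbij : BijOn g (ball 0 1) (ball 0 1))
    (hconf : ∀ p ∈ ball (0:E) 1, ConformalAt g p) {z : E} (hz : z ∈ ball (0:E) 1) :
    ‖fderiv ℝ g z‖ * dB z ≤ dB (g z) := by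
  have : Nontrivial E := Module.nontrivial_of_finrank_pos (R := ℝ) (by omega)
  have hgz := hbij.mapsTo hz
  obtain ⟨M, ⟨hM1, hM2, hM3, -⟩, hM0, -⟩ := mob_move hz
  obtain ⟨K, ⟨hK1, hK2, hK3, -⟩, -, hKz⟩ := mob_move hgz
  rw [dB_set] at hM1 hK1
  simp only [dB_pos_iff] at hM2 hM3 hK2 hK3
  have h0 : (0:E) ∈ ball (0:E) 1 := mem_ball_self one_pos
  have hgM : ∀ p ∈ ball (0:E) 1, ConformalAt (g ∘ M) p := fun p hp =>
    (norm_fderiv_comp' (hM2 p hp) (hconf _ (hM1.mapsTo hp))).1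
  have hup := schwarz_upper hdim (g := K ∘ (g ∘ M)) (hK1.comp (hbij.comp hM1))
    (fun p hp => (norm_fderiv_comp' (hgM p hp) (hK2 _ (hbij.mapsTo (hM1.mapsTo hp)))).1)
    (by simp [hM0, hKz])
  rw [(norm_fderiv_comp' (hgM 0 h0) (hK2 _ (hbij.mapsTo (hM1.mapsTo h0)))).2,
    (norm_fderiv_comp' (hM2 0 h0) (hconf _ (hM1.mapsTo h0))).2] at hup
  simp only [Function.comp_apply, hM0] at hup
  have e1 := hM3 0 h0
  have e2 := hK3 _ hgz
  rw [hM0, dB_zero] at e1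
  rw [hKz, dB_zero] at e2
  have hpos := (dB_pos_iff _).2 hgz
  rw [e1]
  have := mul_le_mul_of_nonneg_left hup hpos.le
  have e3 : dB (g z) * (‖fderiv ℝ K (g z)‖ * (‖fderiv ℝ g z‖ * ‖fderiv ℝ M 0‖)) =
    ‖fderiv ℝ g z‖ * (‖fderiv ℝ M 0‖ * (1 / 2)) := by
    rw [e2]; ring
  linarith

lemma norm_le_of_fix (hdim : 2 ≤ Module.finrank ℝ E) {g : E → E}
    (hbij : BijOn g (ball 0 1) (ball 0 1))
    (hconf : ∀ p ∈ ball (0:E) 1, ConformalAt g p) (hg0 : g 0 = 0) {z : E}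
    (hz : z ∈ ball (0:E) 1) : ‖g z‖ ≤ ‖z‖ := by
  have : Nontrivial E := Module.nontrivial_of_finrank_pos (R := ℝ) (by omega)
  by_cases hgz : g z = 0
  · rw [hgz, norm_zero]; exact norm_nonneg _
  by_cases hz0 : z = 0
  · exact absurd (by rw [hz0, hg0]) hgz
  have hr0 : 0 < ‖z‖ := norm_pos_iff.2 hz0
  have hr1 : ‖z‖ < 1 := mem_ball_zero_iff.1 hz
  set r := ‖z‖ with hr
  set θ : E := r⁻¹ • z with hθ
  have hθ1 : ‖θ‖ = 1 := by rw [hθ, norm_smul, norm_inv, norm_norm]; exact inv_mul_cancel₀ hr0.ne'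
  have hgp : 0 < ‖g z‖ := norm_pos_iff.2 hgz
  set e : E := ‖g z‖⁻¹ • g z with he
  have he1 : ‖e‖ = 1 := by rw [he, norm_smul, norm_inv, norm_norm]; exact inv_mul_cancel₀ hgp.ne'
  set φ : ℝ → ℝ := fun t => inner ℝ e (g (t • θ)) with hφ
  have hmem : ∀ t ∈ Icc (0:ℝ) r, t • θ ∈ ball (0:E) 1 := fun t ht => by
    rw [mem_ball_zero_iff, norm_smul, hθ1, Real.norm_of_nonneg ht.1]; linarith [ht.2]
  have hφle : ∀ t, |φ t| ≤ ‖g (t • θ)‖ := fun t => by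
    have := abs_real_inner_le_norm e (g (t • θ)); rwa [he1, one_mul] at this
  have hφ1 : ∀ t ∈ Icc (0:ℝ) r, |φ t| < 1 := fun t ht =>
    (hφle t).trans_lt (mem_ball_zero_iff.1 (hbij.mapsTo (hmem t ht)))
  have hder : ∀ t ∈ Icc (0:ℝ) r, HasDerivAt φ (inner ℝ e (fderiv ℝ g (t • θ) θ)) t := by
    intro t ht
    have h1 : HasDerivAt (fun s : ℝ => s • θ) θ t := by
      simpa using (hasDerivAt_id t).smul_const θ
    have h2 := ((hconf _ (hmem t ht)).differentiableAt.hasFDerivAt).comp_hasDerivAt t h1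
    have h3 := (innerSL ℝ e).hasFDerivAt.comp_hasDerivAt t h2
    exact h3
  have hdle : ∀ t ∈ Icc (0:ℝ) r,
      inner ℝ e (fderiv ℝ g (t • θ) θ) * (1 - t ^ 2) ≤ 1 - φ t ^ 2 := by
    intro t ht
    have h1 := pick hdim hbij hconf (hmem t ht)
    have h2 := real_inner_le_norm e (fderiv ℝ g (t • θ) θ)
    rw [he1, one_mul, (conf_data _ (conformalAt_iff_isConformalMap_fderiv.1
      (hconf _ (hmem t ht)))).2.1 θ, hθ1, mul_one] at h2
    unfold dB at h1
    rw [norm_smul, hθ1, Real.norm_of_nonneg ht.1, mul_one] at h1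
    have h3 : φ t ^ 2 ≤ ‖g (t • θ)‖ ^ 2 := by
      rw [← sq_abs]; exact pow_le_pow_left₀ (abs_nonneg _) (hφle t) 2
    have h4 : 0 ≤ 1 - t ^ 2 := by nlinarith [ht.1, ht.2]
    nlinarith [mul_le_mul_of_nonneg_right h2 h4]
  set F : ℝ → ℝ := fun t => (Real.log (1 + φ t) - Real.log (1 - φ t)) -
    (Real.log (1 + t) - Real.log (1 - t)) with hF
  have hFd : ∀ t ∈ Icc (0:ℝ) r, ∃ d, HasDerivAt F d t ∧ d ≤ 0 := by
    intro t ht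
    have hp := abs_lt.1 (hφ1 t ht)
    have ht1 : t < 1 := by linarith [ht.2]
    have ht0 := ht.1
    have a1 := ((hder t ht).const_add 1).log (by linarith)
    have a2 := ((hder t ht).const_sub 1).log (by linarith)
    have a3 := ((hasDerivAt_id t).const_add 1).log (by simp; linarith)
    have a4 := ((hasDerivAt_id t).const_sub 1).log (by simp; linarith)
    refine ⟨_, (a1.sub a2).sub (a3.sub a4), ?_⟩
    have h := hdle t ht
    generalize inner ℝ e (fderiv ℝ g (t • θ) θ) = D at *
    simp only [id]
    have q1 : 0 < 1 + φ t := by linarith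
    have q2 : 0 < 1 - φ t := by linarith
    have q3 : 0 < 1 + t := by linarith
    have q4 : 0 < 1 - t := by linarith
    have : D / (1 + φ t) - -D / (1 - φ t) - (1 / (1 + t) - -1 / (1 - t)) =
      2 * (D * (1 - t ^ 2) - (1 - φ t ^ 2)) / ((1 + φ t) * (1 - φ t) * ((1 + t) * (1 - t))) := by
      field_simp; ring
    rw [this]
    apply div_nonpos_of_nonpos_of_nonneg
    · linarith
    · positivity
  have hanti : AntitoneOn F (Icc 0 r) := by
    apply antitoneOn_of_deriv_nonpos (convex_Icc 0 r)
    · intro t ht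
      obtain ⟨d, hd, _⟩ := hFd t ht
      exact hd.continuousAt.continuousWithinAt
    · intro t ht
      obtain ⟨d, hd, _⟩ := hFd t (interior_subset ht)
      exact hd.differentiableAt.differentiableWithinAt
    · intro t ht
      obtain ⟨d, hd, h0⟩ := hFd t (interior_subset ht)
      rw [hd.deriv]; exact h0
  have hle := hanti (left_mem_Icc.2 hr0.le) (right_mem_Icc.2 hr0.le) hr0.le
  have hF0 : F 0 = 0 := by simp [hF, hφ, hg0]
  rw [hF0] at hle
  have hφr : φ r = ‖g z‖ := by
    have : r • θ = z := by rw [hθ, smul_smul, mul_inv_cancel₀ hr0.ne', one_smul]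
    simp only [hφ, this]
    rw [he, real_inner_smul_left, real_inner_self_eq_norm_sq]; field_simp
  have hg1 : ‖g z‖ < 1 := mem_ball_zero_iff.1 (hbij.mapsTo hz)
  simp only [hF, hφr] at hle
  rw [← Real.log_div (by linarith) (by linarith), ← Real.log_div (by linarith) (by linarith)] at hle
  have hle2 := (Real.log_le_log_iff (div_pos (by linarith) (by linarith))
    (div_pos (by linarith) (by linarith))).1 (sub_nonpos.1 hle)
  rw [div_le_div_iff₀ (by linarith) (by linarith)] at hle2
  nlinarith

lemma mob_sigma {δ δ' : E → ℝ} {T : E → E} (h : Mob δ δ' T) {p q : E} (hp : 0 < δ p) (hq : 0 < δ q) :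
    ‖T p - T q‖ ^ 2 * (δ p * δ q) = ‖p - q‖ ^ 2 * (δ' (T p) * δ' (T q)) := by
  rw [h.2.2.2 p q hp hq, h.2.2.1 p hp, h.2.2.1 q hq]; ring

lemma contract_ball (hdim : 2 ≤ Module.finrank ℝ E) {g : E → E}
    (hbij : BijOn g (ball 0 1) (ball 0 1))
    (hconf : ∀ p ∈ ball (0:E) 1, ConformalAt g p) {u v : E} (hu : u ∈ ball (0:E) 1)
    (hv : v ∈ ball (0:E) 1) :
    ‖g u - g v‖ ^ 2 * (dB u * dB v) ≤ ‖u - v‖ ^ 2 * (dB (g u) * dB (g v)) := by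
  have : Nontrivial E := Module.nontrivial_of_finrank_pos (R := ℝ) (by omega)
  have hgu := hbij.mapsTo hu
  have hgv := hbij.mapsTo hv
  obtain ⟨M, hM, hM0, -⟩ := mob_move hu
  obtain ⟨K, hK, -, hKz⟩ := mob_move hgu
  have hM1 := hM.1
  have hK1 := hK.1
  have hM2 := hM.2.1
  have hK2 := hK.2.1
  rw [dB_set] at hM1 hK1
  simp only [dB_pos_iff] at hM2 hK2
  have h0 : (0:E) ∈ ball (0:E) 1 := mem_ball_self one_pos
  obtain ⟨w, hw, rfl⟩ := hM1.surjOn hv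
  have hgM : ∀ p ∈ ball (0:E) 1, ConformalAt (g ∘ M) p := fun p hp =>
    (norm_fderiv_comp' (hM2 p hp) (hconf _ (hM1.mapsTo hp))).1
  have hle := norm_le_of_fix hdim (g := K ∘ (g ∘ M)) (hK1.comp (hbij.comp hM1))
    (fun p hp => (norm_fderiv_comp' (hgM p hp) (hK2 _ (hbij.mapsTo (hM1.mapsTo hp)))).1)
    (by simp [hM0, hKz]) hw
  simp only [Function.comp_apply] at hle
  have hd0 : 0 < dB (0:E) := (dB_pos_iff _).2 h0
  have hdw := (dB_pos_iff _).2 hw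
  have s1 := mob_sigma hM hd0 hdw
  have s2 := mob_sigma hK ((dB_pos_iff _).2 hgu) ((dB_pos_iff _).2 hgv)
  rw [hM0, dB_zero, zero_sub, norm_neg] at s1
  rw [hKz, dB_zero, zero_sub, norm_neg] at s2
  have hc : 0 < dB (K (g (M w))) := (dB_pos_iff _).2 (hK1.mapsTo hgv)
  have hHW : ‖K (g (M w))‖ ^ 2 * dB w ≤ ‖w‖ ^ 2 * dB (K (g (M w))) := by
    have := pow_le_pow_left₀ (norm_nonneg _) hle 2
    unfold dB
    nlinarith
  have hP : 0 < dB u * dB (M w) := mul_pos ((dB_pos_iff _).2 hu) ((dB_pos_iff _).2 hv)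
  have hQ : 0 < dB (g u) * dB (g (M w)) := mul_pos ((dB_pos_iff _).2 hgu) ((dB_pos_iff _).2 hgv)
  generalize dB u * dB (M w) = P at *
  generalize dB (g u) * dB (g (M w)) = Q at *
  generalize dB (K (g (M w))) = c at *
  generalize dB w = d at *
  have hm := mul_le_mul_of_nonneg_right hHW (mul_pos hP hQ).le
  have hcd : 0 < c * d := mul_pos hc hdw
  refine le_of_mul_le_mul_right ?_ hcd
  have e1 : ‖g u - g (M w)‖ ^ 2 * P * (c * d) = 2 * (‖K (g (M w))‖ ^ 2 * d * (P * Q)) := by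
    linear_combination (-2 * P * d) * s2
  have e2 : ‖u - M w‖ ^ 2 * Q * (c * d) = 2 * (‖w‖ ^ 2 * c * (P * Q)) := by
    linear_combination (2 * Q * c) * s1
  linarith

lemma contract (hdim : 2 ≤ Module.finrank ℝ E) {δ δ' : E → ℝ} {A C f : E → E}
    (hA : Mob dB δ A) (hC : Mob δ' dB C) (hbij : BijOn f {x | 0 < δ x} {x | 0 < δ' x})
    (hconf : ∀ p, 0 < δ p → ConformalAt f p) {x y : E} (hx : 0 < δ x) (hy : 0 < δ y) :
    ‖f x - f y‖ ^ 2 * (δ x * δ y) ≤ ‖x - y‖ ^ 2 * (δ' (f x) * δ' (f y)) := by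
  have : Nontrivial E := Module.nontrivial_of_finrank_pos (R := ℝ) (by omega)
  have hA1 := hA.1
  have hC1 := hC.1
  have hA2 := hA.2.1
  have hC2 := hC.2.1
  rw [dB_set] at hA1 hC1
  simp only [dB_pos_iff] at hA2
  obtain ⟨u, hu, rfl⟩ := hA1.surjOn hx
  obtain ⟨v, hv, rfl⟩ := hA1.surjOn hy
  have hfA : ∀ p ∈ ball (0:E) 1, ConformalAt (f ∘ A) p := fun p hp =>
    (norm_fderiv_comp' (hA2 p hp) (hconf _ (hA1.mapsTo hp))).1
  have h := contract_ball hdim (g := C ∘ (f ∘ A)) (hC1.comp (hbij.comp hA1))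
    (fun p hp => (norm_fderiv_comp' (hfA p hp) (hC2 _ (hbij.mapsTo (hA1.mapsTo hp)))).1) hu hv
  simp only [Function.comp_apply] at h
  have hfu : 0 < δ' (f (A u)) := hbij.mapsTo hx
  have hfv : 0 < δ' (f (A v)) := hbij.mapsTo hy
  have hdu := (dB_pos_iff _).2 hu
  have hdv := (dB_pos_iff _).2 hv
  have s1 := mob_sigma hA hdu hdv
  have s2 := mob_sigma hC hfu hfv
  have hP : 0 < dB u * dB v := mul_pos hdu hdv
  have hx' : 0 < δ (A u) := hx
  have hy' : 0 < δ (A v) := hy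
  have hP' : 0 < δ (A u) * δ (A v) := mul_pos hx' hy'
  have hQ : 0 < δ' (f (A u)) * δ' (f (A v)) := mul_pos hfu hfv
  have hQ' : 0 < dB (C (f (A u))) * dB (C (f (A v))) :=
    mul_pos ((dB_pos_iff _).2 (hC1.mapsTo (hbij.mapsTo hx))) ((dB_pos_iff _).2 (hC1.mapsTo (hbij.mapsTo hy)))
  generalize dB u * dB v = P at *
  generalize δ (A u) * δ (A v) = P' at *
  generalize δ' (f (A u)) * δ' (f (A v)) = Q at *
  generalize dB (C (f (A u))) * dB (C (f (A v))) = Q' at *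
  have hm := mul_le_mul_of_nonneg_right h (mul_pos hP' hQ).le
  refine le_of_mul_le_mul_right ?_ (mul_pos hP hQ')
  have e1 : ‖f (A u) - f (A v)‖ ^ 2 * P' * (P * Q') =
    ‖C (f (A u)) - C (f (A v))‖ ^ 2 * P * (P' * Q) := by
    linear_combination (-P' * P) * s2
  have e2 : ‖A u - A v‖ ^ 2 * Q * (P * Q') = ‖u - v‖ ^ 2 * Q' * (P' * Q) := by
    linear_combination (Q * Q') * s1
  linarith
end PartSix

section PartSeven
variable {E : Type*} [NormedAddCommGroup E] [InnerProductSpace ℝ E] [FiniteDimensional ℝ E]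

/-- The comparison quantity `√(|x-y|² + 4 δ(x) δ(y))`. -/
noncomputable def bigA (δ : E → ℝ) (x y : E) : ℝ := Real.sqrt (‖x - y‖ ^ 2 + 4 * (δ x * δ y))

/-- Two-sided control of the distances to the boundary set `S`. -/
def GoodBd (δ : E → ℝ) (S : Set E) : Prop := ∀ x y, 0 < δ x → 0 < δ y →
  (∀ z ∈ S, bigA δ x y ≤ dist x z + dist y z) ∧
  ∃ z ∈ S, dist x z ≤ bigA δ x y ∧ dist y z ≤ bigA δ x y

lemma good_half {e : E} (he : ‖e‖ = 1) :
    GoodBd (fun x => inner ℝ e x) {z : E | inner ℝ e z = 0} := by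
  intro x y hx hy
  have hee : (inner ℝ e e : ℝ) = 1 := by rw [real_inner_self_eq_norm_sq, he]; norm_num
  dsimp only at hx hy
  set a : ℝ := inner ℝ e x with ha
  set b : ℝ := inner ℝ e y with hb
  set y' : E := y - (2 * b) • e with hy'
  have hA : bigA (fun x => inner ℝ e x) x y = ‖x - y'‖ := by
    unfold bigA
    have h1 : x - y' = (x - y) + (2 * b) • e := by rw [hy']; abel
    have h2 : ‖x - y‖ ^ 2 + 4 * (inner ℝ e x * inner ℝ e y) = ‖x - y'‖ ^ 2 := by
      rw [h1, norm_add_sq_real, norm_smul, inner_smul_right, real_inner_comm e (x - y), inner_sub_right,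
        he, ← ha, ← hb, Real.norm_eq_abs, mul_one, sq_abs]
      ring
    rw [h2, Real.sqrt_sq (norm_nonneg _)]
  have hrefl : ∀ z : E, inner ℝ e z = (0:ℝ) → ‖y' - z‖ = ‖y - z‖ := by
    intro z hz
    have h1 : y' - z = (y - z) - (2 * b) • e := by rw [hy']; abel
    have h2 : ‖y' - z‖ ^ 2 = ‖y - z‖ ^ 2 := by
      rw [h1, norm_sub_sq_real, norm_smul, inner_smul_right, real_inner_comm, inner_sub_right, hz,
        he, ← hb, Real.norm_eq_abs, mul_one, sq_abs]
      ring
    exact (sq_eq_sq₀ (norm_nonneg _) (norm_nonneg _)).1 h2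
  rw [hA]
  have hab : 0 < a + b := by linarith
  constructor
  · intro z hz
    rw [dist_eq_norm, dist_eq_norm, ← hrefl z hz]
    have h1 : x - y' = (x - z) - (y' - z) := by abel
    rw [h1]; exact norm_sub_le _ _
  · have hey' : (inner ℝ e y' : ℝ) = -b := by
      rw [hy', inner_sub_right, inner_smul_right, hee, ← hb]; ring
    set z : E := (b / (a + b)) • x + (a / (a + b)) • y' with hz
    have hzS : inner ℝ e z = (0:ℝ) := by
      rw [hz, inner_add_right, inner_smul_right, inner_smul_right, hey', ← ha]; ring
    have h1 : b / (a + b) = 1 - a / (a + b) := by field_simp; ring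
    refine ⟨z, hzS, ?_, ?_⟩
    · have h2 : x - z = (a / (a + b)) • (x - y') := by
        rw [hz, h1]; module
      rw [dist_eq_norm, h2, norm_smul, Real.norm_of_nonneg (by positivity)]
      apply mul_le_of_le_one_left (norm_nonneg _)
      rw [div_le_one hab]; linarith
    · have h2 : y' - z = (b / (a + b)) • (y' - x) := by
        have h1 : a / (a + b) = 1 - b / (a + b) := by field_simp; ring
        rw [hz, h1]; module
      rw [dist_eq_norm, ← hrefl z hzS, h2, norm_smul, Real.norm_of_nonneg (by positivity),
        norm_sub_rev y' x]
      apply mul_le_of_le_one_left (norm_nonneg _)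
      rw [div_le_one hab]; linarith

lemma bigA_symm (δ : E → ℝ) (x y : E) : bigA δ x y = bigA δ y x := by
  unfold bigA; rw [norm_sub_rev, mul_comm (δ x)]

lemma bigA_ball_sq {x y : E} (hx : 0 < dB x) (hy : 0 < dB y) :
    bigA dB x y ^ 2 = 1 - 2 * inner ℝ x y + ‖x‖ ^ 2 * ‖y‖ ^ 2 := by
  unfold bigA
  rw [Real.sq_sqrt (by positivity), norm_sub_sq_real]
  unfold dB; ring

lemma exists_perp (hdim : 2 ≤ Module.finrank ℝ E) (x y : E) :
    ∃ v : E, v ≠ 0 ∧ inner ℝ x v = (0:ℝ) ∧ 0 ≤ (inner ℝ y v : ℝ) := by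
  have h : (Submodule.span ℝ {x})ᗮ ≠ ⊥ := by
    intro h
    rw [Submodule.orthogonal_eq_bot_iff] at h
    have := finrank_le_one (R := ℝ) x (fun w => by
      have : w ∈ Submodule.span ℝ {x} := by rw [h]; trivial
      exact Submodule.mem_span_singleton.1 this)
    omega
  obtain ⟨v, hv, hv0⟩ := Submodule.exists_mem_ne_zero_of_ne_bot h
  have hxv : inner ℝ x v = (0:ℝ) := hv x (Submodule.mem_span_singleton_self x)
  rcases le_total 0 (inner ℝ y v : ℝ) with h1 | h1
  · exact ⟨v, hv0, hxv, h1⟩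
  · refine ⟨-v, neg_ne_zero.2 hv0, ?_, ?_⟩
    · rw [inner_neg_right, hxv, neg_zero]
    · rw [inner_neg_right]; linarith

lemma ball_upper (hdim : 2 ≤ Module.finrank ℝ E) {x y : E} (hx : 0 < dB x) (hy : 0 < dB y)
    (hxy : ‖x‖ ≤ ‖y‖) :
    ∃ z ∈ sphere (0:E) 1, dist x z ≤ bigA dB x y ∧ dist y z ≤ bigA dB x y := by
  have hx1 : ‖x‖ < 1 := mem_ball_zero_iff.1 ((dB_pos_iff x).1 hx)
  have hy1 : ‖y‖ < 1 := mem_ball_zero_iff.1 ((dB_pos_iff y).1 hy)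
  have hx0 := norm_nonneg x
  have hy0 := norm_nonneg y
  obtain ⟨v, hv0, hxv, hyv⟩ := exists_perp hdim x y
  have hvp : 0 < ‖v‖ := norm_pos_iff.2 hv0
  set k : ℝ := (1 - ‖y‖ ^ 2) / 2 with hk
  have hk0 : 0 < k := hy
  set p : E := y + k • x with hp
  have hpn : ‖p‖ ≤ 1 := by
    have h1 := norm_add_le y (k • x)
    rw [norm_smul, Real.norm_of_nonneg hk0.le] at h1
    have h2 : k * ‖x‖ ≤ k * 1 := mul_le_mul_of_nonneg_left hx1.le hk0.le
    have h3 : ‖y‖ + k ≤ 1 := by rw [hk]; nlinarith [sq_nonneg (1 - ‖y‖)]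
    linarith
  have hcont : ContinuousOn (fun t : ℝ => ‖p + t • v‖) (Icc 0 (2 / ‖v‖)) := by fun_prop
  have hend : (1:ℝ) ≤ ‖p + (2 / ‖v‖) • v‖ := by
    have h1 : ‖(2 / ‖v‖) • v‖ = 2 := by
      rw [norm_smul, Real.norm_of_nonneg (by positivity)]; field_simp
    have h2 := norm_sub_le (p + (2 / ‖v‖) • v) p
    rw [add_sub_cancel_left, h1] at h2
    linarith
  obtain ⟨t, ht, htn⟩ := intermediate_value_Icc (by positivity) hcont
    (show (1:ℝ) ∈ Icc _ _ from ⟨by simpa using hpn, hend⟩)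
  have htn : ‖p + t • v‖ = 1 := htn
  have hA0 : 0 ≤ bigA dB x y := Real.sqrt_nonneg _
  have hAsq := bigA_ball_sq hx hy
  have hin : (inner ℝ x y : ℝ) ≤ ‖x‖ * ‖y‖ := real_inner_le_norm x y
  have hxz : (inner ℝ x (p + t • v) : ℝ) = inner ℝ x y + k * ‖x‖ ^ 2 := by
    rw [hp, inner_add_right, inner_add_right, inner_smul_right, inner_smul_right, hxv,
      real_inner_self_eq_norm_sq]; ring
  have hyz : (inner ℝ y (p + t • v) : ℝ) ≥ ‖y‖ ^ 2 + k * inner ℝ x y := by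
    rw [hp, inner_add_right, inner_add_right, inner_smul_right, inner_smul_right,
      real_inner_self_eq_norm_sq, real_inner_comm x y]
    have := mul_nonneg ht.1 hyv
    linarith
  refine ⟨p + t • v, mem_sphere_zero_iff_norm.2 htn, ?_, ?_⟩
  · rw [dist_eq_norm]
    refine (sq_le_sq₀ (norm_nonneg _) hA0).1 ?_
    rw [hAsq, norm_sub_sq_real, htn, hxz, hk]
    apply le_of_eq; ring
  · rw [dist_eq_norm]
    refine (sq_le_sq₀ (norm_nonneg _) hA0).1 ?_
    rw [hAsq, norm_sub_sq_real, htn]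
    have h1 : (1 + ‖y‖ ^ 2) * inner ℝ x y ≤ (1 + ‖y‖ ^ 2) * (‖x‖ * ‖y‖) :=
      mul_le_mul_of_nonneg_left hin (by positivity)
    have h2 : 0 ≤ ‖y‖ * ((‖y‖ - ‖x‖) * (1 - ‖x‖ * ‖y‖)) := by
      apply mul_nonneg hy0
      apply mul_nonneg (by linarith)
      nlinarith
    rw [hk] at hyz
    nlinarith

lemma good_ball (hdim : 2 ≤ Module.finrank ℝ E) : GoodBd dB (sphere (0:E) 1) := by
  intro x y hx hy
  constructor
  · intro z hz
    rw [mem_sphere_zero_iff_norm] at hz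
    have hA0 : 0 ≤ bigA dB x y := Real.sqrt_nonneg _
    have hAsq := bigA_ball_sq hx hy
    have hx1 : ‖x‖ < 1 := mem_ball_zero_iff.1 ((dB_pos_iff x).1 hx)
    by_cases hx0 : x = 0
    · subst hx0
      have : bigA dB 0 y = 1 := by
        rw [norm_zero, inner_zero_left] at hAsq
        nlinarith
      rw [this, dist_zero_left, hz]
      linarith [dist_nonneg (x := y) (y := z)]
    have hxp : 0 < ‖x‖ := norm_pos_iff.2 hx0
    have h1 : bigA dB x y = ‖‖x‖ • y - ‖x‖⁻¹ • x‖ := by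
      refine (sq_eq_sq₀ hA0 (norm_nonneg _)).1 ?_
      rw [hAsq, norm_sub_sq_real, norm_smul, norm_smul, norm_inv, norm_norm, real_inner_smul_left,
        real_inner_smul_right, real_inner_comm]
      field_simp; ring
    have h2 : ‖x - z‖ = ‖‖x‖ • z - ‖x‖⁻¹ • x‖ := by
      refine (sq_eq_sq₀ (norm_nonneg _) (norm_nonneg _)).1 ?_
      rw [norm_sub_sq_real, norm_sub_sq_real, norm_smul, norm_smul, norm_inv, norm_norm,
        real_inner_smul_left, real_inner_smul_right, real_inner_comm, hz]
      field_simp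
    have h3 : ‖x‖ • y - ‖x‖⁻¹ • x = ‖x‖ • (y - z) + (‖x‖ • z - ‖x‖⁻¹ • x) := by
      rw [smul_sub]; abel
    have h4 := norm_add_le (‖x‖ • (y - z)) (‖x‖ • z - ‖x‖⁻¹ • x)
    rw [← h3, ← h1, ← h2, norm_smul, norm_norm] at h4
    rw [dist_eq_norm, dist_eq_norm]
    have h5 : ‖x‖ * ‖y - z‖ ≤ 1 * ‖y - z‖ := mul_le_mul_of_nonneg_right hx1.le (norm_nonneg _)
    linarith
  · rcases le_total ‖x‖ ‖y‖ with h | h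
    · exact ball_upper hdim hx hy h
    · obtain ⟨z, hz, h1, h2⟩ := ball_upper hdim hy hx h
      exact ⟨z, hz, by rw [bigA_symm]; exact h2, by rw [bigA_symm]; exact h1⟩

lemma sInf_bounds {δ : E → ℝ} {S : Set E} (h : GoodBd δ S) {x y : E} (hx : 0 < δ x) (hy : 0 < δ y) :
    bigA δ x y / 2 ≤ sInf ((fun z => max (dist x z) (dist y z)) '' S) ∧
    sInf ((fun z => max (dist x z) (dist y z)) '' S) ≤ bigA δ x y := by
  obtain ⟨h1, z, hz, h2, h3⟩ := h x y hx hy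
  have hlow : ∀ w ∈ (fun z => max (dist x z) (dist y z)) '' S, bigA δ x y / 2 ≤ w := by
    rintro _ ⟨w, hw, rfl⟩
    have := h1 w hw
    have := le_max_left (dist x w) (dist y w)
    have := le_max_right (dist x w) (dist y w)
    dsimp only
    linarith
  refine ⟨le_csInf ⟨_, mem_image_of_mem _ hz⟩ hlow, ?_⟩
  exact (csInf_le ⟨_, hlow⟩ (mem_image_of_mem _ hz)).trans (max_le h2 h3)

lemma final_ineq {δ δ' : E → ℝ} {S S' : Set E} (h : GoodBd δ S) (h' : GoodBd δ' S') {x y x' y' : E}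
    (hx : 0 < δ x) (hy : 0 < δ y) (hx' : 0 < δ' x') (hy' : 0 < δ' y')
    (hc : ‖x' - y'‖ ^ 2 * (δ x * δ y) ≤ ‖x - y‖ ^ 2 * (δ' x' * δ' y')) :
    dist x' y' / sInf ((fun z => max (dist x' z) (dist y' z)) '' S') ≤
    2 * (dist x y / sInf ((fun z => max (dist x z) (dist y z)) '' S)) := by
  obtain ⟨l, u⟩ := sInf_bounds h hx hy
  obtain ⟨l', u'⟩ := sInf_bounds h' hx' hy'
  have hA : 0 < bigA δ x y := Real.sqrt_pos.2 (by positivity)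
  have hA' : 0 < bigA δ' x' y' := Real.sqrt_pos.2 (by positivity)
  have hs : bigA δ x y ^ 2 = ‖x - y‖ ^ 2 + 4 * (δ x * δ y) := Real.sq_sqrt (by positivity)
  have hs' : bigA δ' x' y' ^ 2 = ‖x' - y'‖ ^ 2 + 4 * (δ' x' * δ' y') := Real.sq_sqrt (by positivity)
  rw [dist_eq_norm x' y', dist_eq_norm x y]
  generalize bigA δ x y = A at *
  generalize bigA δ' x' y' = A' at *
  generalize sInf ((fun z => max (dist x z) (dist y z)) '' S) = m at *
  generalize sInf ((fun z => max (dist x' z) (dist y' z)) '' S') = m' at *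
  have hm : 0 < m := by linarith
  have key : ‖x' - y'‖ * A ≤ ‖x - y‖ * A' := by
    refine (sq_le_sq₀ (by positivity) (by positivity)).1 ?_
    rw [mul_pow, mul_pow, hs, hs']
    nlinarith
  calc ‖x' - y'‖ / m' ≤ ‖x' - y'‖ / (A' / 2) := by gcongr
    _ = 2 * (‖x' - y'‖ / A') := by field_simp
    _ ≤ 2 * (‖x - y‖ / A) := by
      gcongr 2 * ?_
      rw [div_le_div_iff₀ hA' hA]; exact key
    _ ≤ 2 * (‖x - y‖ / m) := by gcongr

end PartSeven

section PartEight

lemma half_data (n : ℕ) : ∃ e : EuclideanSpace ℝ (Fin (n + 2)), ‖e‖ = 1 ∧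
    upperHalfSpace n = {x | 0 < inner ℝ e x} ∧ frontier (upperHalfSpace n) = {x | inner ℝ e x = (0:ℝ)} := by
  set e : EuclideanSpace ℝ (Fin (n + 2)) := EuclideanSpace.single (Fin.last (n + 1)) 1 with he
  have he1 : ‖e‖ = 1 := by simp [he]
  have hset : upperHalfSpace n = {x | 0 < inner ℝ e x} := by
    ext x
    simp [upperHalfSpace, he, EuclideanSpace.inner_single_left]
  refine ⟨e, he1, hset, ?_⟩
  have hsurj : Function.Surjective (innerSL ℝ e) := by
    intro t
    refine ⟨t • e, ?_⟩
    rw [innerSL_apply_apply, inner_smul_right, real_inner_self_eq_norm_sq, he1]; ring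
  have hop := (innerSL ℝ e).isOpenMap hsurj
  have h := hop.preimage_frontier_eq_frontier_preimage (innerSL ℝ e).continuous (Ioi 0)
  rw [frontier_Ioi] at h
  rw [hset]
  exact h.symm

/-- All data needed about a domain. -/
lemma dom_data {n : ℕ} {G : Set (EuclideanSpace ℝ (Fin (n + 2)))}
    (hG : G = upperHalfSpace n ∨ G = ball (0 : EuclideanSpace ℝ (Fin (n + 2))) 1) :
    ∃ δ : EuclideanSpace ℝ (Fin (n + 2)) → ℝ, G = {x | 0 < δ x} ∧ GoodBd δ (frontier G) ∧
    (∃ A, Mob dB δ A) ∧ ∃ C, Mob δ dB C := by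
  have hdim : 2 ≤ Module.finrank ℝ (EuclideanSpace ℝ (Fin (n + 2))) := by simp
  have : Nontrivial (EuclideanSpace ℝ (Fin (n + 2))) :=
    Module.nontrivial_of_finrank_pos (R := ℝ) (by omega)
  rcases hG with rfl | rfl
  · obtain ⟨e, he, h1, h2⟩ := half_data n
    refine ⟨fun x => inner ℝ e x, h1, ?_, ⟨_, (mob_cayley he).2⟩, ⟨_, (mob_cayley he).1⟩⟩
    rw [h2]; exact good_half he
  · refine ⟨dB, dB_set.symm, ?_, ⟨_, mob_id _⟩, ⟨_, mob_id _⟩⟩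
    rw [frontier_ball _ one_ne_zero]
    exact good_ball hdim
end PartEight

/-- If `G, G′ ∈ {ℍⁿ, 𝔹ⁿ}` and `f : G → G′` is a bijection of `G` onto `G′` that is
conformal at every point of `G`, then `c̃_{G′}(f(x), f(y)) ≤ 2·c̃_G(x, y)` for all
`x, y ∈ G`. -/
theorem stmt_16 {n : ℕ} (G G' : Set (EuclideanSpace ℝ (Fin (n + 2))))
    (hG : G = upperHalfSpace n ∨ G = ball (0 : EuclideanSpace ℝ (Fin (n + 2))) 1)
    (hG' : G' = upperHalfSpace n ∨ G' = ball (0 : EuclideanSpace ℝ (Fin (n + 2))) 1)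
    (f : EuclideanSpace ℝ (Fin (n + 2)) → EuclideanSpace ℝ (Fin (n + 2)))
    (hbij : BijOn f G G') (hconf : ∀ p ∈ G, ConformalAt f p)
    (x y : EuclideanSpace ℝ (Fin (n + 2))) (hx : x ∈ G) (hy : y ∈ G) :
    ctilde G' (f x) (f y) ≤ 2 * ctilde G x y := by
  obtain ⟨δ, hGδ, hgood, ⟨A, hA⟩, -⟩ := dom_data hG
  obtain ⟨δ', hGδ', hgood', -, ⟨C, hC⟩⟩ := dom_data hG'
  have hdim : 2 ≤ Module.finrank ℝ (EuclideanSpace ℝ (Fin (n + 2))) := by simp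
  have hmem : ∀ p, p ∈ G ↔ 0 < δ p := fun p => by rw [hGδ]; rfl
  have hmem' : ∀ p, p ∈ G' ↔ 0 < δ' p := fun p => by rw [hGδ']; rfl
  have hb : BijOn f {x | 0 < δ x} {x | 0 < δ' x} := by rw [← hGδ, ← hGδ']; exact hbij
  exact final_ineq hgood hgood' ((hmem x).1 hx) ((hmem y).1 hy) ((hmem' _).1 (hbij.mapsTo hx))
    ((hmem' _).1 (hbij.mapsTo hy))
    (contract hdim hA hC hb (fun p hp => hconf p ((hmem p).2 hp)) ((hmem x).1 hx) ((hmem y).1 hy))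
end
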